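/- arXiv:2103.01704 — 3 statements merged into one kernel-verified Lean document; each statement's English description precedes it below -/
import Mathlib

section
/- For every positive integer n there exists a semigroup identity u = v (a pair of distinct words over a two-letter alphabet) that is satisfied by UT_n(T) but not by UT_{n+1}(T). Consequently UT_n(T) and UT_{n+1}(T) generate different semigroup varieties. -/
/-- The tropical (max-plus) semiring `ℝ ∪ {-∞}`: `⊥` is `-∞`,
`Finset.sup` is tropical sum (max), `+` is tropical product. -/
abbrev Trop := WithBot ℝ

/-- Tropical (max-plus) matrix multiplication: `(X*Y) i j = max_k (X i k + Y k j)`. -/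
def tmul {ι : Type*} [Fintype ι] (X Y : Matrix ι ι Trop) : Matrix ι ι Trop :=
  fun i j => Finset.univ.sup fun k => X i k + Y k j

/-- The tropical identity matrix: `0` on the diagonal, `-∞` elsewhere. -/
def tId (ι : Type*) [DecidableEq ι] : Matrix ι ι Trop :=
  fun i j => if i = j then (0 : Trop) else ⊥

/-- Upper triangular tropical matrices: `-∞` below the diagonal. -/
def IsUT {n : ℕ} (X : Matrix (Fin n) (Fin n) Trop) : Prop :=
  ∀ i j : Fin n, (j : ℕ) < (i : ℕ) → X i j = ⊥

/-- Evaluation of a word over the alphabet `{a, b}` (encoded as `Bool`,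
with `a = true`, `b = false`) at matrices `X, Y` (substituting `a ↦ X`, `b ↦ Y`),
using tropical matrix multiplication. -/
def evalWord {ι : Type*} [Fintype ι] [DecidableEq ι] (w : List Bool)
    (X Y : Matrix ι ι Trop) : Matrix ι ι Trop :=
  (w.map fun c => if c then X else Y).foldr tmul (tId ι)

/-- Substitution of words into a word: `subst w x y = w[x, y]`
(replace each `a = true` by the word `x` and each `b = false` by `y`). -/
def subst (w x y : List Bool) : List Bool :=
  w.flatMap fun c => if c then x else y

/-!
Start from a nontrivial identity of `UT_n` and cancel common first letters for as long as it holds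
in `UT_{n+1}` too. Bordering the matrices by a new first row lets one read off the first letter of a
word and the value in `UT_n` of the rest of it, so an identity `cu = dv` of `UT_{n+1}` forces
`c = d` and yields the shorter identity `u = v` of `UT_n`. As no nonempty word equals the empty one
identically, the process stops at an identity of `UT_n` that fails in `UT_{n+1}`.

Nontrivial identities exist by induction, starting from `ab = ba` in `UT_1`. If `u = v` holds in
`UT_n`, then the values `P, Q` of `u, v` in `UT_{n+1}` differ at most in the top right corner, and
`(uv)u(uv) = (uv)v(uv)` holds in `UT_{n+1}`: in either product, a path using the corner entry of the
middle factor weighs no more than one that takes the larger of the first and last diagonal entries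
there and crosses inside an outer factor `PQ` instead.
-/

@[simp]
theorem tId_apply_self {ι : Type*} [DecidableEq ι] (i : ι) : tId ι i i = 0 := if_pos rfl

theorem tId_apply_ne {ι : Type*} [DecidableEq ι] {i j : ι} (h : i ≠ j) : tId ι i j = ⊥ := if_neg h

section Tmul

variable {ι : Type*} [Fintype ι]

theorem tmul_apply_le_iff {X Y : Matrix ι ι Trop} {i j : ι} {x : Trop} :
    tmul X Y i j ≤ x ↔ ∀ k, X i k + Y k j ≤ x := by
  simp only [tmul, Finset.sup_le_iff, Finset.mem_univ, true_implies]

theorem le_tmul_apply (X Y : Matrix ι ι Trop) (i k j : ι) : X i k + Y k j ≤ tmul X Y i j :=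
  tmul_apply_le_iff.1 le_rfl k

theorem tmul_apply_add (X Y : Matrix ι ι Trop) (i j : ι) (x : Trop) :
    tmul X Y i j + x = Finset.univ.sup fun k => X i k + Y k j + x :=
  Finset.apply_sup_eq_sup_comp_of_linearOrder (· + x) add_left_mono (WithBot.bot_add x)

theorem add_tmul_apply (X Y : Matrix ι ι Trop) (i j : ι) (x : Trop) :
    x + tmul X Y i j = Finset.univ.sup fun k => x + (X i k + Y k j) :=
  Finset.apply_sup_eq_sup_comp_of_linearOrder (x + ·) add_right_mono (WithBot.add_bot x)

theorem tmul_tmul_apply_le_iff {X Y Z : Matrix ι ι Trop} {i j : ι} {x : Trop} :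
    tmul (tmul X Y) Z i j ≤ x ↔ ∀ k l, X i k + Y k l + Z l j ≤ x := by
  simp only [tmul_apply_le_iff, tmul_apply_add, Finset.sup_le_iff, Finset.mem_univ, true_implies]
  exact forall_comm

theorem le_tmul_tmul_apply (X Y Z : Matrix ι ι Trop) (i k l j : ι) :
    X i k + Y k l + Z l j ≤ tmul (tmul X Y) Z i j :=
  tmul_tmul_apply_le_iff.1 le_rfl k l

theorem tmul_assoc (X Y Z : Matrix ι ι Trop) : tmul (tmul X Y) Z = tmul X (tmul Y Z) := by
  ext i j : 2
  refine eq_of_forall_ge_iff fun x => ?_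
  simp only [tmul_tmul_apply_le_iff, tmul_apply_le_iff (Y := tmul Y Z), add_tmul_apply,
    Finset.sup_le_iff, Finset.mem_univ, true_implies, add_assoc]

variable [DecidableEq ι]

@[simp]
theorem tId_tmul (X : Matrix ι ι Trop) : tmul (tId ι) X = X := by
  ext i j : 2
  refine le_antisymm (tmul_apply_le_iff.2 fun k => ?_) ?_
  · obtain rfl | h := eq_or_ne i k
    · rw [tId_apply_self, zero_add]
    · simp only [tId_apply_ne h, WithBot.bot_add, bot_le]
  · simpa using le_tmul_apply (tId ι) X i i j

theorem evalWord_cons (c : Bool) (w : List Bool) (X Y : Matrix ι ι Trop) :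
    evalWord (c :: w) X Y = tmul (if c then X else Y) (evalWord w X Y) := rfl

theorem evalWord_append (u v : List Bool) (X Y : Matrix ι ι Trop) :
    evalWord (u ++ v) X Y = tmul (evalWord u X Y) (evalWord v X Y) := by
  induction u with
  | nil => exact (tId_tmul _).symm
  | cons c u ih => rw [List.cons_append, evalWord_cons, evalWord_cons, ih, tmul_assoc]

theorem evalWord_tId (w : List Bool) : evalWord w (tId ι) (tId ι) = tId ι := by
  induction w with
  | nil => rfl
  | cons c w ih => rw [evalWord_cons, ih, ite_self, tId_tmul]

end Tmul

section UpperTriangular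

variable {n : ℕ} {X Y : Matrix (Fin n) (Fin n) Trop}

theorem isUT_tId (n : ℕ) : IsUT (tId (Fin n)) :=
  fun _ _ h => tId_apply_ne (Fin.ne_of_gt h)

theorem isUT_bot (n : ℕ) : IsUT (Matrix.of fun _ _ : Fin n => (⊥ : Trop)) :=
  fun _ _ _ => rfl

protected theorem IsUT.tmul (hX : IsUT X) (hY : IsUT Y) : IsUT (tmul X Y) := by
  refine fun i j hji => le_bot_iff.1 (tmul_apply_le_iff.2 fun k => ?_)
  obtain hki | hik := lt_or_ge k i
  · simp only [hX i k hki, WithBot.bot_add, le_refl]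
  · simp only [hY k j (lt_of_lt_of_le hji hik), WithBot.add_bot, le_refl]

protected theorem IsUT.evalWord (hX : IsUT X) (hY : IsUT Y) (w : List Bool) :
    IsUT (evalWord w X Y) := by
  induction w with
  | nil => exact isUT_tId n
  | cons c w ih =>
    cases c
    · exact hY.tmul ih
    · exact hX.tmul ih

theorem IsUT.tmul_apply_self (hX : IsUT X) (hY : IsUT Y) (i : Fin n) :
    tmul X Y i i = X i i + Y i i := by
  refine le_antisymm (tmul_apply_le_iff.2 fun k => ?_) (le_tmul_apply X Y i i i)
  obtain hki | rfl | hik := lt_trichotomy k i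
  · simp only [hX i k hki, WithBot.bot_add, bot_le]
  · rfl
  · simp only [hY k i hik, WithBot.add_bot, bot_le]

variable {m : ℕ} {f : Fin m → Fin n}

theorem IsUT.submatrix (hX : IsUT X) (hf : StrictMono f) : IsUT (X.submatrix f f) :=
  fun _ _ h => hX _ _ (hf h)

theorem IsUT.submatrix_tmul (hX : IsUT X) (hY : IsUT Y) (hconv : (Set.range f).OrdConnected) :
    (tmul X Y).submatrix f f = tmul (X.submatrix f f) (Y.submatrix f f) := by
  ext i j : 2
  rw [Matrix.submatrix_apply]
  refine le_antisymm (tmul_apply_le_iff.2 fun k => ?_)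
    (tmul_apply_le_iff.2 fun k => le_tmul_apply X Y (f i) (f k) (f j))
  obtain hk | hk := lt_or_ge k (f i)
  · simp only [hX _ _ hk, WithBot.bot_add, bot_le]
  obtain hk' | hk' := lt_or_ge (f j) k
  · simp only [hY _ _ hk', WithBot.add_bot, bot_le]
  obtain ⟨l, rfl⟩ := hconv.out (Set.mem_range_self i) (Set.mem_range_self j) ⟨hk, hk'⟩
  exact le_tmul_apply (X.submatrix f f) (Y.submatrix f f) i l j

theorem IsUT.submatrix_evalWord (hX : IsUT X) (hY : IsUT Y) (hf : Function.Injective f)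
    (hconv : (Set.range f).OrdConnected) (w : List Bool) :
    (evalWord w X Y).submatrix f f =
      evalWord w (X.submatrix f f) (Y.submatrix f f) := by
  induction w with
  | nil =>
    ext i j : 2
    exact if_congr hf.eq_iff rfl rfl
  | cons c w ih =>
    rw [evalWord_cons, evalWord_cons, ← ih]
    cases c
    · exact hY.submatrix_tmul (hX.evalWord hY w) hconv
    · exact hX.submatrix_tmul (hX.evalWord hY w) hconv

end UpperTriangular

theorem ordConnected_range_finSucc (n : ℕ) : (Set.range (Fin.succ : Fin n → _)).OrdConnected := by
  rw [show Set.range (Fin.succ : Fin n → _) = Set.Ioi 0 by ext; simp [Fin.pos_iff_ne_zero]]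
  exact Set.ordConnected_Ioi

theorem ordConnected_range_finCastSucc (n : ℕ) :
    (Set.range (Fin.castSucc : Fin n → _)).OrdConnected := by
  rw [show Set.range (Fin.castSucc : Fin n → _) = Set.Iio (Fin.last n) by ext; simp [Fin.lt_def]]
  exact Set.ordConnected_Iio

/-- The semigroup identity `u = v` holds in `UT_n(𝕋)`. -/
def SatisfiesIdentity (n : ℕ) (u v : List Bool) : Prop :=
  ∀ X Y : Matrix (Fin n) (Fin n) Trop, IsUT X → IsUT Y → evalWord u X Y = evalWord v X Y

/-- `P` and `Q` agree except possibly in the top right corner. This is how the values of `u` and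
`v` in `UT_{n+1}(𝕋)` are related when `u = v` is an identity of `UT_n(𝕋)`. -/
def EqOffCorner {n : ℕ} (P Q : Matrix (Fin (n + 1)) (Fin (n + 1)) Trop) : Prop :=
  ∀ i j, i ≠ 0 ∨ j ≠ Fin.last n → P i j = Q i j

namespace SatisfiesIdentity

variable {n : ℕ} {u v : List Bool}

theorem symm (h : SatisfiesIdentity n u v) : SatisfiesIdentity n v u :=
  fun X Y hX hY => (h X Y hX hY).symm

theorem evalWord_apply_eq {m : ℕ} (h : SatisfiesIdentity m u v)
    {X Y : Matrix (Fin n) (Fin n) Trop} (hX : IsUT X) (hY : IsUT Y) {f : Fin m → Fin n}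
    (hf : StrictMono f) (hconv : (Set.range f).OrdConnected) (i j : Fin m) :
    evalWord u X Y (f i) (f j) = evalWord v X Y (f i) (f j) := by
  have hsub : (evalWord u X Y).submatrix f f = (evalWord v X Y).submatrix f f := by
    rw [hX.submatrix_evalWord hY hf.injective hconv, hX.submatrix_evalWord hY hf.injective hconv]
    exact h _ _ (hX.submatrix hf) (hY.submatrix hf)
  exact congrFun₂ hsub i j

theorem eqOffCorner (h : SatisfiesIdentity n u v)
    {X Y : Matrix (Fin (n + 1)) (Fin (n + 1)) Trop} (hX : IsUT X) (hY : IsUT Y) :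
    EqOffCorner (evalWord u X Y) (evalWord v X Y) := by
  intro i j hij
  obtain hji | hij' := lt_or_ge j i
  · rw [hX.evalWord hY u i j hji, hX.evalWord hY v i j hji]
  obtain hi | hj := hij
  · have hj : j ≠ 0 := ((Fin.pos_iff_ne_zero.2 hi).trans_le hij').ne'
    obtain ⟨i, rfl⟩ := Fin.exists_succ_eq.2 hi
    obtain ⟨j, rfl⟩ := Fin.exists_succ_eq.2 hj
    exact h.evalWord_apply_eq hX hY Fin.strictMono_succ (ordConnected_range_finSucc n) i j
  · have hi : i ≠ Fin.last n := (hij'.trans_lt (Fin.lt_last_iff_ne_last.2 hj)).ne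
    obtain ⟨i, rfl⟩ := Fin.exists_castSucc_eq.2 hi
    obtain ⟨j, rfl⟩ := Fin.exists_castSucc_eq.2 hj
    exact h.evalWord_apply_eq hX hY Fin.strictMono_castSucc (ordConnected_range_finCastSucc n) i j

end SatisfiesIdentity

section Existence

theorem add_add_le_max_of_min_add_le {M : Type*} [AddCommMonoid M] [LinearOrder M]
    [IsOrderedAddMonoid M] {a b x r : M} (h : min a b + x ≤ r) :
    a + a + x + (b + b) ≤ max (a + a + a + r) (r + b + (b + b)) := by
  obtain hab | hba := le_total a b
  · rw [min_eq_left hab] at h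
    refine le_max_of_le_right ?_
    calc a + a + x + (b + b) = a + x + a + (b + b) := by abel
      _ ≤ r + b + (b + b) := by gcongr
  · rw [min_eq_right hba] at h
    refine le_max_of_le_left ?_
    calc a + a + x + (b + b) = a + a + b + (b + x) := by abel
      _ ≤ a + a + a + r := by gcongr

variable {n : ℕ} {P Q R : Matrix (Fin (n + 1)) (Fin (n + 1)) Trop}

namespace EqOffCorner

theorem symm (hPQ : EqOffCorner P Q) : EqOffCorner Q P :=
  fun i j hij => (hPQ i j hij).symm

theorem tmul_tmul_apply_le {A B : Matrix (Fin (n + 1)) (Fin (n + 1)) Trop}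
    (hPQ : EqOffCorner P Q) (hA : IsUT A) (hB : IsUT B)
    (hcorner : A 0 0 + P 0 (Fin.last n) + B (Fin.last n) (Fin.last n) ≤
      tmul (tmul A Q) B 0 (Fin.last n)) (i j : Fin (n + 1)) :
    tmul (tmul A P) B i j ≤ tmul (tmul A Q) B i j := by
  refine tmul_tmul_apply_le_iff.2 fun k l => ?_
  by_cases hkl : k ≠ 0 ∨ l ≠ Fin.last n
  · rw [hPQ k l hkl]
    exact le_tmul_tmul_apply A Q B i k l j
  obtain ⟨rfl, rfl⟩ : k = 0 ∧ l = Fin.last n := by simpa only [not_or, not_not] using hkl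
  obtain rfl | hi := eq_or_ne i 0
  · obtain rfl | hj := eq_or_ne j (Fin.last n)
    · exact hcorner
    · simp only [hB _ _ (Fin.lt_last_iff_ne_last.2 hj), WithBot.add_bot, bot_le]
  · simp only [hA _ _ (Fin.pos_iff_ne_zero.2 hi), WithBot.bot_add, bot_le]

theorem tmul_tmul_apply_le_of_min_add_le (hPQ : EqOffCorner P Q) (hR : IsUT R)
    (hfirst : R 0 0 = Q 0 0 + Q 0 0)
    (hlast : R (Fin.last n) (Fin.last n) =
      Q (Fin.last n) (Fin.last n) + Q (Fin.last n) (Fin.last n))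
    (hmin : min (Q 0 0) (Q (Fin.last n) (Fin.last n)) + P 0 (Fin.last n) ≤ R 0 (Fin.last n))
    (i j : Fin (n + 1)) :
    tmul (tmul R P) R i j ≤ tmul (tmul R Q) R i j := by
  refine hPQ.tmul_tmul_apply_le hR hR ?_ i j
  have stay_first := le_tmul_tmul_apply R Q R 0 0 0 (Fin.last n)
  have stay_last := le_tmul_tmul_apply R Q R 0 (Fin.last n) (Fin.last n) (Fin.last n)
  rw [hfirst] at stay_first ⊢
  rw [hlast] at stay_last ⊢
  exact (add_add_le_max_of_min_add_le hmin).trans (max_le stay_first stay_last)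

theorem tmul_tmul_eq (hPQ : EqOffCorner P Q) (hn : 0 < n) (hP : IsUT P) (hQ : IsUT Q) :
    tmul (tmul (tmul P Q) P) (tmul P Q) = tmul (tmul (tmul P Q) Q) (tmul P Q) := by
  have hR : IsUT (tmul P Q) := hP.tmul hQ
  have hlast_ne : Fin.last n ≠ 0 := Fin.last_eq_zero_iff.not.2 hn.ne'
  have hfirst : P 0 0 = Q 0 0 := hPQ 0 0 (.inr hlast_ne.symm)
  have hlast : P (Fin.last n) (Fin.last n) = Q (Fin.last n) (Fin.last n) := hPQ _ _ (.inl hlast_ne)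
  ext i j : 2
  refine le_antisymm (hPQ.tmul_tmul_apply_le_of_min_add_le hR ?_ ?_ ?_ i j)
    (hPQ.symm.tmul_tmul_apply_le_of_min_add_le hR ?_ ?_ ?_ i j)
  · rw [hP.tmul_apply_self hQ, hfirst]
  · rw [hP.tmul_apply_self hQ, hlast]
  · calc min (Q 0 0) (Q (Fin.last n) (Fin.last n)) + P 0 (Fin.last n)
        ≤ Q (Fin.last n) (Fin.last n) + P 0 (Fin.last n) := by gcongr; exact min_le_right _ _
      _ = P 0 (Fin.last n) + Q (Fin.last n) (Fin.last n) := add_comm _ _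
      _ ≤ tmul P Q 0 (Fin.last n) := le_tmul_apply P Q 0 _ _
  · rw [hP.tmul_apply_self hQ, hfirst]
  · rw [hP.tmul_apply_self hQ, hlast]
  · calc min (P 0 0) (P (Fin.last n) (Fin.last n)) + Q 0 (Fin.last n)
        ≤ P 0 0 + Q 0 (Fin.last n) := by gcongr; exact min_le_left _ _
      _ ≤ tmul P Q 0 (Fin.last n) := le_tmul_apply P Q 0 _ _

end EqOffCorner

theorem satisfiesIdentity_one_ab_ba : SatisfiesIdentity 1 [true, false] [false, true] := by
  intro X Y _ _
  ext i j : 2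
  simp [evalWord, tmul, tId, Subsingleton.elim i 0, Subsingleton.elim j 0, add_comm]

theorem SatisfiesIdentity.succ {u v : List Bool} (h : SatisfiesIdentity n u v) (hn : 0 < n) :
    SatisfiesIdentity (n + 1) (u ++ v ++ u ++ (u ++ v)) (u ++ v ++ v ++ (u ++ v)) := by
  intro X Y hX hY
  simp only [evalWord_append]
  exact (h.eqOffCorner hX hY).tmul_tmul_eq hn (hX.evalWord hY u) (hX.evalWord hY v)

theorem exists_satisfiesIdentity (hn : 0 < n) :
    ∃ u v : List Bool, u ≠ v ∧ SatisfiesIdentity n u v := by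
  induction n, hn using Nat.le_induction with
  | base => exact ⟨[true, false], [false, true], by decide, satisfiesIdentity_one_ab_ba⟩
  | succ n hn ih =>
    obtain ⟨u, v, huv, h⟩ := ih
    refine ⟨_, _, fun heq => huv ?_, h.succ hn⟩
    exact List.append_cancel_left (List.append_cancel_right heq)

end Existence

section Cancellation

variable {n : ℕ} {X Y : Matrix (Fin n) (Fin n) Trop}

/-- The matrix `M` bordered by a new first row `(-∞, r)` and a new first column of `-∞`. A path from
the new index to an old one spends its first letter on `r` and continues inside `M`. -/
def bordered (r : Fin n → Trop) (M : Matrix (Fin n) (Fin n) Trop) :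
    Matrix (Fin (n + 1)) (Fin (n + 1)) Trop :=
  Fin.cons (Fin.cons ⊥ r) fun i => Fin.cons ⊥ (M i)

theorem IsUT.bordered (hX : IsUT X) (r : Fin n → Trop) : IsUT (bordered r X) := by
  intro i j hji
  obtain ⟨i, rfl⟩ := Fin.exists_succ_eq.2 (Fin.ne_zero_of_lt hji)
  induction j using Fin.cases with
  | zero => rfl
  | succ j => exact hX i j (Fin.succ_lt_succ_iff.1 hji)

theorem evalWord_bordered_succ_succ (hX : IsUT X) (hY : IsUT Y) (r s : Fin n → Trop)
    (w : List Bool) (i j : Fin n) :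
    evalWord w (bordered r X) (bordered s Y) i.succ j.succ = evalWord w X Y i j :=
  congrFun₂ ((hX.bordered r).submatrix_evalWord (hY.bordered s) (Fin.succ_injective n)
    (ordConnected_range_finSucc n) w) i j

theorem evalWord_cons_bordered_zero_succ (hX : IsUT X) (hY : IsUT Y)
    (A B : Matrix (Fin n) (Fin n) Trop) (c : Bool) (w : List Bool) (i j : Fin n) :
    evalWord (c :: w) (bordered (A i) X) (bordered (B i) Y) 0 j.succ =
      tmul (if c then A else B) (evalWord w X Y) i j := by
  refine eq_of_forall_ge_iff fun x => ?_
  rw [evalWord_cons, tmul_apply_le_iff, tmul_apply_le_iff, Fin.forall_fin_succ]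
  simp only [evalWord_bordered_succ_succ hX hY]
  cases c <;> simp [bordered]

namespace SatisfiesIdentity

variable {u v : List Bool} {c d : Bool}

theorem of_cons_cons (h : SatisfiesIdentity (n + 1) (c :: u) (c :: v)) :
    SatisfiesIdentity n u v := by
  intro X Y hX hY
  ext i j : 2
  have hrow := congrFun₂ (h _ _ (hX.bordered (tId _ i)) (hY.bordered (tId _ i))) 0 j.succ
  simpa only [evalWord_cons_bordered_zero_succ hX hY, ite_self, tId_tmul] using hrow

theorem head_eq (hn : 0 < n) (h : SatisfiesIdentity (n + 1) (c :: u) (d :: v)) : c = d := by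
  let A : Matrix (Fin n) (Fin n) Trop := tId (Fin n)
  let B : Matrix (Fin n) (Fin n) Trop := Matrix.of fun _ _ => ⊥
  let i : Fin n := ⟨0, hn⟩
  have hI := isUT_tId n
  have head_value (e : Bool) (w : List Bool) :
      evalWord (e :: w) (bordered (A i) (tId _)) (bordered (B i) (tId _)) 0 i.succ =
        if e then 0 else ⊥ := by
    rw [evalWord_cons_bordered_zero_succ hI hI, evalWord_tId]
    cases e
    · exact (isUT_bot n).tmul_apply_self hI i
    · exact (congrFun₂ (tId_tmul _) i i).trans (tId_apply_self i)
  have hcd := congrFun₂ (h _ _ (hI.bordered (A i)) (hI.bordered (B i))) 0 i.succ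
  rw [head_value, head_value] at hcd
  cases c <;> cases d <;> simp_all

theorem eq_nil (hn : 0 < n) (h : SatisfiesIdentity n [] v) : v = [] := by
  cases v with
  | nil => rfl
  | cons d v =>
    let i : Fin n := ⟨0, hn⟩
    have hentry := congrFun₂ (h _ _ (isUT_bot n) (isUT_bot n)) i i
    rw [evalWord_cons d, ite_self,
      (isUT_bot n).tmul_apply_self ((isUT_bot n).evalWord (isUT_bot n) v), Matrix.of_apply,
      WithBot.bot_add] at hentry
    exact absurd ((tId_apply_self i).symm.trans hentry) WithBot.zero_ne_bot

theorem exists_not_satisfiesIdentity_succ (hn : 0 < n) (huv : u ≠ v)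
    (h : SatisfiesIdentity n u v) :
    ∃ u' v' : List Bool, u' ≠ [] ∧ v' ≠ [] ∧ u' ≠ v' ∧
      SatisfiesIdentity n u' v' ∧ ¬ SatisfiesIdentity (n + 1) u' v' := by
  induction u generalizing v with
  | nil => exact absurd (h.eq_nil hn).symm huv
  | cons c u ih =>
    cases v with
    | nil => exact absurd (h.symm.eq_nil hn) huv
    | cons d v =>
      by_cases hsucc : SatisfiesIdentity (n + 1) (c :: u) (d :: v)
      · obtain rfl := hsucc.head_eq hn
        exact ih (fun huv' => huv (congrArg _ huv')) hsucc.of_cons_cons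
      · exact ⟨_, _, List.cons_ne_nil _ _, List.cons_ne_nil _ _, huv, h, hsucc⟩

end SatisfiesIdentity

end Cancellation

/-- For every positive integer `n` there is a semigroup identity `u = v`
(a pair of distinct nonempty words over a two-letter alphabet) satisfied by
`UT_n(𝕋)` but not by `UT_{n+1}(𝕋)`. -/
theorem stmt4 (n : ℕ) (hn : 0 < n) :
    ∃ u v : List Bool, u ≠ [] ∧ v ≠ [] ∧ u ≠ v ∧
      (∀ X Y : Matrix (Fin n) (Fin n) Trop, IsUT X → IsUT Y →
        evalWord u X Y = evalWord v X Y) ∧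
      ∃ X Y : Matrix (Fin (n + 1)) (Fin (n + 1)) Trop, IsUT X ∧ IsUT Y ∧
        evalWord u X Y ≠ evalWord v X Y := by
  obtain ⟨u, v, huv, h⟩ := exists_satisfiesIdentity hn
  obtain ⟨u', v', hu', hv', huv', h', hfail⟩ := h.exists_not_satisfiesIdentity_succ hn huv
  refine ⟨u', v', hu', hv', huv', h', ?_⟩
  simpa only [SatisfiesIdentity, not_forall, exists_prop] using hfail
end

section
/- Let n ≥ 3 be odd, let A ∈ M_n(T) have underlying permutation an n-cycle and let B ∈ M_n(T) be an invertible diagonal matrix that is not a scaling of the identity. Then with u₂ = a²b⁴a² a²b² a²b⁴a² and v₂ = a²b⁴a² b²a² a²b⁴a², which form an identity satisfied by M_2(T), one has u₂(A,B) ≠ v₂(A,B). -/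
/-- The word `u₂ = a²b⁴a² a²b² a²b⁴a²` (with `a = true`, `b = false`). -/
def u2w : List Bool :=
  List.replicate 2 true ++ List.replicate 4 false ++ List.replicate 4 true ++
    List.replicate 2 false ++ List.replicate 2 true ++ List.replicate 4 false ++
    List.replicate 2 true

/-- The word `v₂ = a²b⁴a² b²a² a²b⁴a²`. -/
def v2w : List Bool :=
  List.replicate 2 true ++ List.replicate 4 false ++ List.replicate 2 true ++
    List.replicate 2 false ++ List.replicate 4 true ++ List.replicate 4 false ++
    List.replicate 2 true

/-!
Over a commutative ring, let `P` and `Q` be `2 × 2` matrices, `C = P * Q - Q * P` and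
`W = P * Q ^ 2 * P`. As `C` is traceless, Cayley–Hamilton gives
`W * C * W = tr (W * C) • W + det W • C`; here `tr (W * C) = 0`, because the traces of a word in two
`2 × 2` matrices and of the reversed word agree. So
`W * (P * Q) * W - W * (Q * P) * W = (det P ^ 2 * det Q ^ 2) • (P * Q - Q * P)`. Cleared of signs,
this identity holds over every commutative semiring. In the max-plus semiring the squares
`P = X ^ 2` and `Q = Y ^ 2` have determinants dominated by their diagonal terms, and then both
`W * (P * Q) * W` and `W * (Q * P) * W` absorb the correction terms on the right, hence are equal.

Invertible matrices can be cancelled, so for the monomial matrices `A` and `B` the equation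
`u₂ = v₂` says that `A ^ 2` commutes with `B ^ 2`. This makes the diagonal of `B` invariant under
`σ ^ 2`, which is again an `n`-cycle because `n` is odd, so `B` is a scaling of the identity.
-/

section Adjan

variable {M : Type*} [Monoid M] {x y : M}

/-- The word `xy²x` that surrounds `xy` and `yx` in Adjan's identity. -/
def adjanFlank (x y : M) : M := x * y * y * x

/-- Adjan's identity `xy²x·xy·xy²x = xy²x·yx·xy²x` for the pair `x, y`. The identity `u₂ = v₂` is
the instance `x = a²`, `y = b²`. -/
def AdjanIdentity (x y : M) : Prop :=
  adjanFlank x y * (x * y) * adjanFlank x y = adjanFlank x y * (y * x) * adjanFlank x y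

theorem AdjanIdentity.commute (h : AdjanIdentity x y) (hx : IsUnit x) (hy : IsUnit y) :
    Commute x y := by
  have hflank : IsUnit (adjanFlank x y) := ((hx.mul hy).mul hy).mul hx
  exact hflank.mul_left_cancel (hflank.mul_right_cancel h)

end Adjan

section Perm

variable {α : Type*} {σ : Equiv.Perm α}

theorem apply_eq_of_sameCycle {β : Type*} {f : α → β} (hf : f ∘ σ = f) {x y : α}
    (h : σ.SameCycle x y) : f x = f y := by
  have hσ (z : α) : f (σ z) = f z := congrFun hf z
  have hinv (z : α) : f (σ⁻¹ z) = f z := by simpa using (hσ (σ⁻¹ z)).symm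
  obtain ⟨k, rfl⟩ := h
  induction k with
  | zero => rfl
  | succ k ih => rw [add_comm, zpow_one_add, Equiv.Perm.mul_apply, hσ, ih]
  | pred k ih => rw [sub_eq_neg_add, zpow_add, zpow_neg_one, Equiv.Perm.mul_apply, hinv, ih]

theorem sameCycle_pow_of_coprime_card [Fintype α] [DecidableEq α] (hσ : σ.IsCycle)
    (hsupp : σ.support = Finset.univ) {k : ℕ} (hk : k.Coprime (Fintype.card α)) (x y : α) :
    (σ ^ k).SameCycle x y := by
  have hcop : k.Coprime (orderOf σ) := by rwa [hσ.orderOf, hsupp, Finset.card_univ]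
  have hmoved (z : α) : (σ ^ k) z ≠ z := by
    rw [← Equiv.Perm.mem_support, Equiv.Perm.support_pow_coprime hcop, hsupp]
    exact Finset.mem_univ z
  exact (hσ.pow_iff.2 hcop).sameCycle (hmoved x) (hmoved y)

end Perm

open Matrix

section Monomial

variable {ι : Type*} {σ : Equiv.Perm ι}

/-- `A` has underlying permutation `σ` and invertible nonzero entries. -/
structure IsMonomial {S : Type*} [MonoidWithZero S] (σ : Equiv.Perm ι) (A : Matrix ι ι S) :
    Prop where
  isUnit_apply (i : ι) : IsUnit (A i (σ i))
  apply_eq_zero {i j : ι} : j ≠ σ i → A i j = 0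

namespace IsMonomial

variable [DecidableEq ι]

theorem eq_diagonal {S : Type*} [MonoidWithZero S] {A : Matrix ι ι S} (hA : IsMonomial 1 A) :
    A = diagonal A.diag := by
  ext i j
  rcases eq_or_ne j i with rfl | hj
  · rw [diagonal_apply_eq, diag_apply]
  · rw [diagonal_apply_ne' _ hj, hA.apply_eq_zero hj]

variable [Fintype ι]

section Semiring

variable {S : Type*} [Semiring S] {A : Matrix ι ι S}

theorem eq_diagonal_mul_permMatrix (hA : IsMonomial σ A) :
    A = diagonal (fun i => A i (σ i)) * σ.permMatrix S := by
  ext i j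
  rw [diagonal_mul, Equiv.Perm.permMatrix, PEquiv.toMatrix_apply]
  by_cases hj : j = σ i
  · simp [hj]
  · simp [hA.apply_eq_zero hj, Ne.symm hj]

theorem isUnit (hA : IsMonomial σ A) : IsUnit A := by
  have hperm : IsUnit (σ.permMatrix S) := by
    rw [isUnit_iff_exists]
    refine ⟨σ⁻¹.permMatrix S, ?_, ?_⟩ <;> simp [← permMatrix_mul]
  rw [hA.eq_diagonal_mul_permMatrix]
  exact ((Pi.isUnit_iff.2 hA.isUnit_apply).map (diagonalRingHom ι S)).mul hperm

end Semiring

variable {S : Type*} [CommSemiring S] {A : Matrix ι ι S}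

theorem semiconjBy_diagonal (hA : IsMonomial σ A) (b : ι → S) :
    SemiconjBy A (diagonal b) (diagonal (b ∘ σ)) := by
  ext i j
  rw [mul_diagonal, diagonal_mul]
  by_cases hj : j = σ i
  · simp [hj, mul_comm]
  · simp [hA.apply_eq_zero hj]

theorem comp_sq_eq_of_commute (hA : IsMonomial σ A) {b : ι → S}
    (h : Commute (A ^ 2) (diagonal b)) : b ∘ ⇑(σ ^ 2) = b := by
  have hconj : SemiconjBy (A ^ 2) (diagonal b) (diagonal (b ∘ ⇑(σ ^ 2))) := by
    rw [sq]
    exact (hA.semiconjBy_diagonal (b ∘ σ)).mul_left (hA.semiconjBy_diagonal b)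
  have hunit : IsUnit (A ^ 2) := hA.isUnit.pow 2
  exact diagonal_injective (hunit.mul_right_cancel (hconj.eq.symm.trans h.eq))

theorem diag_sq_comp_sq_eq {B : Matrix ι ι S} (hA : IsMonomial σ A) (hB : IsMonomial 1 B)
    (h : AdjanIdentity (A ^ 2) (B ^ 2)) : (B.diag ^ 2) ∘ ⇑(σ ^ 2) = B.diag ^ 2 := by
  have hcomm : Commute (A ^ 2) (B ^ 2) := h.commute (hA.isUnit.pow 2) (hB.isUnit.pow 2)
  rw [hB.eq_diagonal, diagonal_pow] at hcomm
  simpa using hA.comp_sq_eq_of_commute hcomm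

end IsMonomial

end Monomial

section Determinant

variable {S : Type*} [CommSemiring S] (P Q : Matrix (Fin 2) (Fin 2) S)

/-- The positive part of `det P ^ 2 = detSqPos P - detSqNeg P`. -/
def detSqPos : S := (P 0 0 * P 1 1) ^ 2 + (P 0 1 * P 1 0) ^ 2

/-- The negative part of `det P ^ 2 = detSqPos P - detSqNeg P`. -/
def detSqNeg : S := P 0 0 * P 1 1 * (P 0 1 * P 1 0) + P 0 0 * P 1 1 * (P 0 1 * P 1 0)

/-- The square of the diagonal term of `det P`, which is the value of the tropical `det P ^ 2` when
that term dominates. -/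
def diagSq : S := (P 0 0 * P 1 1) ^ 2

/-- The product `P * Q` without the terms `P i i * Q i i` that it shares with `Q * P`, so that over
a ring `mixedPart P Q - mixedPart Q P` is the commutator of `P` and `Q`. -/
def mixedPart : Matrix (Fin 2) (Fin 2) S :=
  !![P 0 1 * Q 1 0, P 0 0 * Q 0 1 + P 0 1 * Q 1 1;
     P 1 0 * Q 0 0 + P 1 1 * Q 1 0, P 1 0 * Q 0 1]

theorem transpose_adjanFlank : (adjanFlank P Q)ᵀ = adjanFlank Pᵀ Qᵀ := by
  simp only [adjanFlank, transpose_mul, mul_assoc]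

theorem transpose_mixedPart : (mixedPart P Q)ᵀ = mixedPart Qᵀ Pᵀ := by
  ext i j
  fin_cases i <;> fin_cases j <;> simp [mixedPart, mul_comm]

-- The sign-free form of `W * (P * Q - Q * P) * W = (det P ^ 2 * det Q ^ 2) • (P * Q - Q * P)`.
theorem adjan_add_mixedPart :
    adjanFlank P Q * (P * Q) * adjanFlank P Q +
        ((detSqPos P * detSqPos Q + detSqNeg P * detSqNeg Q) • mixedPart Q P +
          (detSqPos P * detSqNeg Q + detSqNeg P * detSqPos Q) • mixedPart P Q) =
      adjanFlank P Q * (Q * P) * adjanFlank P Q +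
        ((detSqPos P * detSqPos Q + detSqNeg P * detSqNeg Q) • mixedPart P Q +
          (detSqPos P * detSqNeg Q + detSqNeg P * detSqPos Q) • mixedPart Q P) := by
  ext i j
  fin_cases i <;> fin_cases j <;>
  · simp only [adjanFlank, detSqPos, detSqNeg, mixedPart, Matrix.add_apply, Matrix.smul_apply,
      smul_eq_mul, mul_apply, Fin.sum_univ_two, of_apply, cons_val', cons_val_zero, cons_val_one,
      cons_val_fin_one, Fin.zero_eta, Fin.mk_one]
    ring

end Determinant

section Idempotent

variable {S : Type*} [IdemCommSemiring S]

section Paths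

variable {ι : Type*} [Fintype ι]

theorem apply_mul_apply_le_mul_apply {l n : Type*} (P : Matrix l ι S) (Q : Matrix ι n S)
    (i : l) (k : ι) (j : n) : P i k * Q k j ≤ (P * Q) i j := by
  rw [mul_apply]
  exact Finset.single_le_sum_of_canonicallyOrdered (f := fun k => P i k * Q k j)
    (Finset.mem_univ k)

variable [DecidableEq ι] (P Q : Matrix ι ι S)

theorem path_le_adjanFlank_apply (i a b c j : ι) :
    P i a * Q a b * Q b c * P c j ≤ adjanFlank P Q i j :=
  calc
    P i a * Q a b * Q b c * P c j ≤ (P * Q) i b * Q b c * P c j := by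
      gcongr; exact apply_mul_apply_le_mul_apply P Q i a b
    _ ≤ (P * Q * Q) i c * P c j := by
      gcongr; exact apply_mul_apply_le_mul_apply (P * Q) Q i b c
    _ ≤ adjanFlank P Q i j := apply_mul_apply_le_mul_apply (P * Q * Q) P i c j

theorem path_le_adjan_apply (i a b c d e f g h k j : ι) :
    P i a * Q a b * Q b c * P c d * (P d e * Q e f) * (P f g * Q g h * Q h k * P k j) ≤
      (adjanFlank P Q * (P * Q) * adjanFlank P Q) i j :=
  calc
    _ ≤ adjanFlank P Q i d * (P * Q) d f * adjanFlank P Q f j := by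
      gcongr
      · exact path_le_adjanFlank_apply P Q i a b c d
      · exact apply_mul_apply_le_mul_apply P Q d e f
      · exact path_le_adjanFlank_apply P Q f g h k j
    _ ≤ (adjanFlank P Q * (P * Q)) i f * adjanFlank P Q f j := by
      gcongr; exact apply_mul_apply_le_mul_apply _ _ i d f
    _ ≤ _ := apply_mul_apply_le_mul_apply _ _ i f j

theorem diag_mul_two_crossings_le_adjan_apply (i j : ι) :
    (P i i * P j j) ^ 2 * (Q i i * Q j j) ^ 2 * (P i j * Q j i + Q i j * P j i) ≤
      (adjanFlank P Q * (P * Q) * adjanFlank P Q) i i := by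
  rw [mul_add]
  refine add_le ?_ ?_
  · convert path_le_adjan_apply P Q i i i i j j j j j i i using 1
    ring
  · convert path_le_adjan_apply P Q i i j j j j j i i i i using 1
    ring

end Paths

variable {P : Matrix (Fin 2) (Fin 2) S}

/-- The diagonal term of the tropical determinant of `P` dominates the other one. -/
def IsDiagDominant (P : Matrix (Fin 2) (Fin 2) S) : Prop :=
  P 0 1 * P 1 0 ≤ P 0 0 * P 1 1

theorem IsDiagDominant.detSqPos_le (hP : IsDiagDominant P) : detSqPos P ≤ diagSq P :=
  add_le le_rfl (pow_le_pow_left' hP 2)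

theorem IsDiagDominant.detSqNeg_le (hP : IsDiagDominant P) : detSqNeg P ≤ diagSq P := by
  have h : P 0 0 * P 1 1 * (P 0 1 * P 1 0) ≤ diagSq P :=
    (mul_le_mul_right hP _).trans_eq (sq _).symm
  exact add_le h h

variable [Std.Total (α := S) (· ≤ ·)]

theorem mul_le_sq_add_sq (u v : S) : u * v ≤ u ^ 2 + v ^ 2 := by
  rcases total_of (· ≤ ·) u v with h | h
  · exact (mul_le_mul_left h v).trans ((sq v).symm.trans_le le_add_self)
  · exact (mul_le_mul_right h u).trans ((sq u).symm.trans_le le_self_add)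

theorem sq_mul_sq_le_mul_cube_add_pow_four (u v : S) : u ^ 2 * v ^ 2 ≤ u * v ^ 3 + u ^ 4 := by
  rcases total_of (· ≤ ·) u v with h | h
  · calc
      u ^ 2 * v ^ 2 = u * v ^ 2 * u := by ring
      _ ≤ u * v ^ 2 * v := by gcongr
      _ = u * v ^ 3 := by ring
      _ ≤ u * v ^ 3 + u ^ 4 := le_self_add
  · calc
      u ^ 2 * v ^ 2 ≤ u ^ 2 * u ^ 2 := by gcongr
      _ = u ^ 4 := by ring
      _ ≤ u * v ^ 3 + u ^ 4 := le_add_self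

theorem diag_mul_one_crossing_le_adjan_apply {ι : Type*} [Fintype ι] [DecidableEq ι]
    (P Q : Matrix ι ι S) (i j : ι) :
    (P i i * P j j) ^ 2 * (Q i i * Q j j) ^ 2 *
        (P i i * Q i j + P i j * Q j j + (Q i i * P i j + Q i j * P j j)) ≤
      (adjanFlank P Q * (P * Q) * adjanFlank P Q) i j := by
  -- The last two terms are not paths of the word; they become paths once diagonal factors at `i`
  -- are traded for diagonal factors at `j` or vice versa, whichever are larger.
  have hdiag : (P i i * P j j) ^ 2 * (Q i i * Q j j) ^ 2 ≤
      P i i * Q i i * (P j j * Q j j) ^ 3 + (P i i * Q i i) ^ 4 := by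
    convert sq_mul_sq_le_mul_cube_add_pow_four (P i i * Q i i) (P j j * Q j j) using 1
    ring
  rw [mul_add, mul_add]
  refine add_le (add_le ?_ ?_) ((mul_le_mul_left hdiag _).trans ?_)
  · convert path_le_adjan_apply P Q i i i i i i j j j j j using 1
    ring
  · convert path_le_adjan_apply P Q i i i i i j j j j j j using 1
    ring
  rw [mul_add, add_mul, add_mul]
  refine add_le (add_le ?_ ?_) (add_le ?_ ?_)
  · convert path_le_adjan_apply P Q i i i i j j j j j j j using 1
    ring
  · convert path_le_adjan_apply P Q i i i i i i i i i i j using 1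
    ring
  · convert path_le_adjan_apply P Q i i i j j j j j j j j using 1
    ring
  · convert path_le_adjan_apply P Q i i i i i i i i i j j using 1
    ring

theorem diagSq_smul_mixedPart_le_adjan (P Q : Matrix (Fin 2) (Fin 2) S) (i j : Fin 2) :
    ((diagSq P * diagSq Q) • (mixedPart P Q + mixedPart Q P)) i j ≤
      (adjanFlank P Q * (P * Q) * adjanFlank P Q) i j := by
  have hswap : (P 0 0 * P 1 1) ^ 2 * (Q 0 0 * Q 1 1) ^ 2 =
      (P 1 1 * P 0 0) ^ 2 * (Q 1 1 * Q 0 0) ^ 2 := by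
    ring
  fin_cases i <;> fin_cases j
  · exact diag_mul_two_crossings_le_adjan_apply P Q 0 1
  · exact diag_mul_one_crossing_le_adjan_apply P Q 0 1
  · have h := diag_mul_one_crossing_le_adjan_apply P Q 1 0
    rw [← hswap] at h
    simpa [diagSq, mixedPart, add_comm] using h
  · have h := diag_mul_two_crossings_le_adjan_apply P Q 1 0
    rw [← hswap] at h
    exact h

theorem diagSq_smul_mixedPart_le_adjan_swap (P Q : Matrix (Fin 2) (Fin 2) S) (i j : Fin 2) :
    ((diagSq P * diagSq Q) • (mixedPart P Q + mixedPart Q P)) i j ≤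
      (adjanFlank P Q * (Q * P) * adjanFlank P Q) i j := by
  have htrans : (adjanFlank Pᵀ Qᵀ * (Pᵀ * Qᵀ) * adjanFlank Pᵀ Qᵀ) =
      (adjanFlank P Q * (Q * P) * adjanFlank P Q)ᵀ := by
    simp only [transpose_mul, transpose_adjanFlank, mul_assoc]
  have h := diagSq_smul_mixedPart_le_adjan Pᵀ Qᵀ j i
  rw [htrans, ← transpose_mixedPart, ← transpose_mixedPart, ← transpose_add, add_comm] at h
  exact h

theorem isDiagDominant_sq (X : Matrix (Fin 2) (Fin 2) S) : IsDiagDominant (X ^ 2) := by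
  have hcross : X 0 0 * X 1 1 * (X 0 1 * X 1 0) ≤ (X 0 0 * X 1 1) ^ 2 + (X 0 1 * X 1 0) ^ 2 :=
    mul_le_sq_add_sq _ _
  simp only [IsDiagDominant, sq X, mul_apply, Fin.sum_univ_two]
  calc
    (X 0 0 * X 0 1 + X 0 1 * X 1 1) * (X 1 0 * X 0 0 + X 1 1 * X 1 0) =
        X 0 1 * X 1 0 * (X 0 0 ^ 2 + X 1 1 ^ 2) +
          (X 0 0 * X 1 1 * (X 0 1 * X 1 0) + X 0 0 * X 1 1 * (X 0 1 * X 1 0)) := by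
      ring
    _ ≤ X 0 1 * X 1 0 * (X 0 0 ^ 2 + X 1 1 ^ 2) +
          ((X 0 0 * X 1 1) ^ 2 + (X 0 1 * X 1 0) ^ 2) := by
      exact add_le_add le_rfl (add_le hcross hcross)
    _ = (X 0 0 * X 0 0 + X 0 1 * X 1 0) * (X 1 0 * X 0 1 + X 1 1 * X 1 1) := by ring

theorem IsDiagDominant.adjanIdentity {Q : Matrix (Fin 2) (Fin 2) S} (hP : IsDiagDominant P)
    (hQ : IsDiagDominant Q) : AdjanIdentity P Q := by
  have hmixed {s t : S} (hs : s ≤ diagSq P * diagSq Q) (ht : t ≤ diagSq P * diagSq Q)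
      (i j : Fin 2) : (s • mixedPart P Q + t • mixedPart Q P) i j ≤
        ((diagSq P * diagSq Q) • (mixedPart P Q + mixedPart Q P)) i j := by
    rw [smul_add]
    exact add_le_add (mul_le_mul_left hs _) (mul_le_mul_left ht _)
  have hpos : detSqPos P * detSqPos Q + detSqNeg P * detSqNeg Q ≤ diagSq P * diagSq Q :=
    add_le (mul_le_mul' hP.detSqPos_le hQ.detSqPos_le) (mul_le_mul' hP.detSqNeg_le hQ.detSqNeg_le)
  have hneg : detSqPos P * detSqNeg Q + detSqNeg P * detSqPos Q ≤ diagSq P * diagSq Q :=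
    add_le (mul_le_mul' hP.detSqPos_le hQ.detSqNeg_le) (mul_le_mul' hP.detSqNeg_le hQ.detSqPos_le)
  ext i j
  have hid := congrFun (congrFun (adjan_add_mixedPart P Q) i) j
  rw [add_comm (_ • mixedPart Q P), Matrix.add_apply, Matrix.add_apply (_ * _)] at hid
  rwa [((hmixed hneg hpos i j).trans (diagSq_smul_mixedPart_le_adjan P Q i j)).add_eq_left,
    ((hmixed hpos hneg i j).trans (diagSq_smul_mixedPart_le_adjan_swap P Q i j)).add_eq_left]
    at hid

end Idempotent

/-- The max-plus semiring over `R`. The type tag `Multiplicative` turns the addition of `WithBot R`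
into multiplication and frees `+` for the maximum. -/
abbrev MaxPlus (R : Type*) : Type _ := Multiplicative (WithBot R)

namespace MaxPlus

open Multiplicative

variable {R : Type*}

section Semiring

variable [AddCommMonoid R] [LinearOrder R] [IsOrderedAddMonoid R]

instance : Add (MaxPlus R) := ⟨max⟩

instance : Zero (MaxPlus R) := ⟨⊥⟩

instance : IdemCommSemiring (MaxPlus R) where
  __ := (inferInstance : CommMonoid (MaxPlus R))
  __ := (inferInstance : Lattice (MaxPlus R))
  __ := (inferInstance : OrderBot (MaxPlus R))
  add_assoc := max_assoc
  add_comm := max_comm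
  zero_add := bot_sup_eq
  add_zero := sup_bot_eq
  nsmul := nsmulRec
  left_distrib := mul_max
  right_distrib := max_mul
  zero_mul x := WithBot.bot_add x.toAdd
  mul_zero x := WithBot.add_bot x.toAdd
  add_eq_sup _ _ := rfl

theorem ofAdd_sup {ι : Type*} (s : Finset ι) (f : ι → WithBot R) :
    ofAdd (s.sup f) = ∑ i ∈ s, ofAdd (f i) := by
  classical
  induction s using Finset.induction_on with
  | empty => rfl
  | insert a s ha ih => rw [Finset.sum_insert ha, Finset.sup_insert, ← ih]; rfl

end Semiring

theorem isUnit_ofAdd [AddGroup R] {x : WithBot R} (hx : x ≠ ⊥) : IsUnit (ofAdd x) := by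
  lift x to R using hx
  rw [isUnit_iff_exists]
  refine ⟨ofAdd ((-x : R) : WithBot R), ?_, ?_⟩ <;>
    simp [← ofAdd_add, ← WithBot.coe_add]

theorem sq_injective [AddMonoid R] [IsAddTorsionFree R] :
    Function.Injective fun x : MaxPlus R => x ^ 2 := by
  intro x y h
  change WithBot R at x y
  replace h : x + x = y + y := (sq (ofAdd x)).symm.trans (h.trans (sq (ofAdd y)))
  induction x with
  | bot =>
    induction y with
    | bot => rfl
    | coe b => exact absurd h.symm (WithBot.coe_ne_bot (a := b + b))
  | coe a =>
    induction y with
    | bot => exact absurd h (WithBot.coe_ne_bot (a := a + a))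
    | coe b =>
      norm_cast at h
      rw [← two_nsmul, ← two_nsmul] at h
      exact congrArg _ (nsmul_right_injective two_ne_zero h)

end MaxPlus

section Evaluation

open Multiplicative

variable {ι : Type*}

theorem isMonomial_map_ofAdd {σ : Equiv.Perm ι} {A : Matrix ι ι Trop}
    (hA : ∀ i j, A i j ≠ ⊥ ↔ j = σ i) : IsMonomial σ (A.map ofAdd : Matrix ι ι (MaxPlus ℝ)) where
  isUnit_apply i := MaxPlus.isUnit_ofAdd ((hA i (σ i)).2 rfl)
  apply_eq_zero {i j} hj := congrArg ofAdd (not_not.1 (mt (hA i j).1 hj))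

theorem map_tmul [Fintype ι] (X Y : Matrix ι ι Trop) :
    (tmul X Y).map ofAdd = (X.map ofAdd * Y.map ofAdd : Matrix ι ι (MaxPlus ℝ)) := by
  ext i j
  exact MaxPlus.ofAdd_sup _ _

variable [DecidableEq ι]

theorem map_tId : (tId ι).map ofAdd = (1 : Matrix ι ι (MaxPlus ℝ)) := by
  ext i j
  rw [map_apply, tId, one_apply, apply_ite ofAdd]
  rfl

variable [Fintype ι] (X Y : Matrix ι ι Trop)

theorem map_evalWord (w : List Bool) :
    (evalWord w X Y).map ofAdd =
      (w.map fun c => (if c then X.map ofAdd else Y.map ofAdd : Matrix ι ι (MaxPlus ℝ))).prod := by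
  induction w with
  | nil => exact map_tId
  | cons c w ih =>
    rw [List.map_cons, List.prod_cons, ← ih, ← apply_ite fun Z : Matrix ι ι Trop => Z.map ofAdd]
    exact map_tmul _ _

theorem evalWord_u2w_eq_v2w_iff : evalWord u2w X Y = evalWord v2w X Y ↔
    AdjanIdentity ((X.map ofAdd : Matrix ι ι (MaxPlus ℝ)) ^ 2) (Y.map ofAdd ^ 2) := by
  rw [← (Matrix.map_injective (ofAdd (α := Trop)).injective).eq_iff, map_evalWord, map_evalWord]
  simp [u2w, v2w, AdjanIdentity, adjanFlank, pow_succ, mul_assoc]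

end Evaluation

/-- For odd `n ≥ 3`, `A` with underlying permutation an `n`-cycle and `B` an
invertible diagonal matrix that is not a scaling of the identity, the identity
`u₂ = v₂` is satisfied by `M_2(𝕋)` but `u₂(A,B) ≠ v₂(A,B)`. -/
theorem stmt11 (n : ℕ) (hn : 3 ≤ n) (hodd : Odd n)
    (A B : Matrix (Fin n) (Fin n) Trop) (σ : Equiv.Perm (Fin n))
    (hcyc : σ.IsCycle) (hsupp : σ.support = Finset.univ)
    (hA : ∀ i j : Fin n, A i j ≠ ⊥ ↔ j = σ i)
    (hB : ∀ i j : Fin n, B i j ≠ ⊥ ↔ i = j)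
    (hBne : ¬ ∃ c : ℝ, ∀ i : Fin n, B i i = (c : Trop)) :
    (∀ X Y : Matrix (Fin 2) (Fin 2) Trop, evalWord u2w X Y = evalWord v2w X Y) ∧
    evalWord u2w A B ≠ evalWord v2w A B := by
  refine ⟨fun X Y => ?_, fun h => hBne ?_⟩
  · rw [evalWord_u2w_eq_v2w_iff]
    exact (isDiagDominant_sq _).adjanIdentity (isDiagDominant_sq _)
  rw [evalWord_u2w_eq_v2w_iff] at h
  have hA' := isMonomial_map_ofAdd hA
  have hB' := isMonomial_map_ofAdd (σ := 1) fun i j => (hB i j).trans eq_comm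
  have hinv : B.diag ∘ ⇑(σ ^ 2) = B.diag :=
    funext fun i => MaxPlus.sq_injective (congrFun (hA'.diag_sq_comp_sq_eq hB' h) i)
  have hcop : Nat.Coprime 2 (Fintype.card (Fin n)) := by
    rwa [Fintype.card_fin, Nat.coprime_two_left]
  obtain ⟨i₀⟩ : Nonempty (Fin n) := hcyc.nonempty
  obtain ⟨c, hc⟩ := WithBot.ne_bot_iff_exists.1 ((hB i₀ i₀).2 rfl)
  exact ⟨c, fun i => (apply_eq_of_sameCycle hinv
    (sameCycle_pow_of_coprime_card hcyc hsupp hcop i i₀)).trans hc.symm⟩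
end

section
/- Let u, v be words over {a,b} such that u[ab,ba] = v[ab,ba] is a semigroup identity satisfied by UT₄(T). Then the identity abuab[ab,ba] = abvab[ab,ba] is satisfied by the plactic monoid P₄ of rank 4. -/
/-- The Knuth relations on the free monoid over `{1, 2, 3, 4}` (encoded as `Fin 4`):
`bca = bac` for `a < b ≤ c` and `cab = acb` for `a ≤ b < c`. -/
def KnuthRel : FreeMonoid (Fin 4) → FreeMonoid (Fin 4) → Prop := fun x y =>
  (∃ a b c : Fin 4, a < b ∧ b ≤ c ∧
    x = FreeMonoid.of b * FreeMonoid.of c * FreeMonoid.of a ∧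
    y = FreeMonoid.of b * FreeMonoid.of a * FreeMonoid.of c) ∨
  (∃ a b c : Fin 4, a ≤ b ∧ b < c ∧
    x = FreeMonoid.of c * FreeMonoid.of a * FreeMonoid.of b ∧
    y = FreeMonoid.of a * FreeMonoid.of c * FreeMonoid.of b)

/-- The plactic monoid of rank 4. -/
abbrev P4 := (conGen KnuthRel).Quotient

/-- Evaluation of a word over `{a, b}` (`a = true`, `b = false`) in a monoid,
substituting `a ↦ x`, `b ↦ y`. -/
def evalM {M : Type*} [Monoid M] (w : List Bool) (x y : M) : M :=
  (w.map fun c => if c then x else y).prod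

/-!
The representation of Johnson and Kambites sends a word to tropical matrices whose entries are the
greatest numbers of its letters that can be counted along chains of sets of letters. Such scores,
along the sets of one, two, three and four letters, express the row multiplicities of the insertion
tableau of the word, hence determine its class in the plactic monoid. The chains of sets of one,
three and four letters have at most four members, so `UT₄` controls them. The two maximal chains of
pairs have five members, and give `5 × 5` upper triangular matrices.

For these, compare `u[ab, ba]` and `v[ab, ba]` entrywise. By the identity of `UT₄` they agree on
paths that avoid the first node, and on paths from the first node that avoid the second. If the
diagonal of `ab` does not decrease from the first node to the second, then after the prefix
`abba = ab[ab, ba]` every path leaving the first node for the second is dominated by a path that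
moves to the second node inside the prefix. So the prefix makes the two words equal. By symmetry the
suffix `abba` does so if the diagonal does not decrease from the last node to the second to last.
One of the two always holds, as in a chain `{0, 1}, {0, 2}, …, {1, 3}, {2, 3}` the two ends together
count each letter as often as their two neighbours together.
-/

section Words

/-- The word `u[ab, ba]`. -/
def substAbBa (u : List Bool) : List Bool :=
  subst u [true, false] [false, true]

theorem substAbBa_cons (c : Bool) (u : List Bool) :
    substAbBa (c :: u) = [c, !c] ++ substAbBa u := by
  cases c <;> rfl

theorem substAbBa_append (u v : List Bool) :
    substAbBa (u ++ v) = substAbBa u ++ substAbBa v :=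
  List.flatMap_append

theorem reverse_substAbBa (u : List Bool) :
    (substAbBa u).reverse = substAbBa (u.reverse.map not) := by
  induction u with
  | nil => rfl
  | cons c u ih =>
    rw [substAbBa_cons, List.reverse_append, ih, List.reverse_cons (a := c) (as := u),
      List.map_append, substAbBa_append]
    cases c <;> rfl

theorem substAbBa_ab_append_ab (u : List Bool) :
    substAbBa ([true, false] ++ u ++ [true, false]) =
      [true, false, false, true] ++ substAbBa u ++ [true, false, false, true] := by
  rw [substAbBa_append, substAbBa_append]
  rfl

variable {M : Type*} [Monoid M]

theorem evalM_cons (c : Bool) (w : List Bool) (x y : M) :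
    evalM (c :: w) x y = (if c then x else y) * evalM w x y := by
  simp [evalM]

theorem evalM_pair (c d : Bool) (x y : M) :
    evalM [c, d] x y = (if c then x else y) * if d then x else y := by
  simp [evalM]

theorem evalM_abba (x y : M) : evalM [true, false, false, true] x y = x * y * (y * x) := by
  simp [evalM, mul_assoc]

theorem evalM_append (w w' : List Bool) (x y : M) :
    evalM (w ++ w') x y = evalM w x y * evalM w' x y := by
  simp [evalM]

theorem map_evalM {N : Type*} [Monoid N] (f : M →* N) (w : List Bool) (x y : M) :
    f (evalM w x y) = evalM w (f x) (f y) := by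
  simp only [evalM, map_list_prod, List.map_map]
  congr 2
  funext c
  exact apply_ite f _ _ _

end Words

/-- Square tropical matrices, as a type of their own so that multiplication means the tropical
product `tmul`. -/
def TropMatrix (ι : Type*) : Type _ :=
  Matrix ι ι Trop

theorem Trop.add_sup {ι : Type*} (s : Finset ι) (f : ι → Trop) (c : Trop) :
    c + s.sup f = s.sup fun k => c + f k :=
  Finset.apply_sup_eq_sup_comp (c + ·) (fun _ _ => (max_add_add_left c _ _).symm)
    (WithBot.add_bot c)

theorem Trop.sup_add {ι : Type*} (s : Finset ι) (f : ι → Trop) (c : Trop) :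
    s.sup f + c = s.sup fun k => f k + c := by
  simp only [add_comm _ c, Trop.add_sup]

namespace TropMatrix

section Subgraphs

variable {ι κ : Type*}

/-- Restriction of a tropical matrix along an index map, used to pass to the sub-digraph on the
image of `e`. -/
def restrict (e : κ → ι) (X : TropMatrix ι) : TropMatrix κ :=
  fun i j => X (e i) (e j)

/-- The matrix `X` with row and column `m` erased: its paths are the paths of `X` that never
visit `m`. -/
def avoid [DecidableEq ι] (m : ι) (X : TropMatrix ι) : TropMatrix ι :=
  fun i j => if i = m ∨ j = m then ⊥ else X i j

variable [DecidableEq ι]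

theorem avoid_apply_right (m : ι) (X : TropMatrix ι) (i : ι) : avoid m X i m = ⊥ :=
  if_pos (Or.inr rfl)

theorem avoid_apply_of_ne {m i j : ι} (X : TropMatrix ι) (hi : i ≠ m) (hj : j ≠ m) :
    avoid m X i j = X i j :=
  if_neg (by tauto)

theorem avoid_le (m : ι) (X : TropMatrix ι) (i j : ι) : avoid m X i j ≤ X i j := by
  unfold avoid
  split_ifs
  exacts [bot_le, le_rfl]

end Subgraphs

section Monoid

variable {ι : Type*} [Fintype ι] [DecidableEq ι]

instance : Monoid (TropMatrix ι) where
  mul := tmul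
  one := tId ι
  mul_assoc A B C := by
    change tmul (tmul A B) C = tmul A (tmul B C)
    funext i j
    simp only [tmul, Trop.sup_add, Trop.add_sup, add_assoc]
    exact Finset.sup_comm _ _ _
  one_mul A := by
    change tmul (tId ι) A = A
    funext i j
    refine le_antisymm (Finset.sup_le fun k _ => ?_) ?_
    · rcases eq_or_ne i k with rfl | h
      · simp [tId]
      · simp [tId, h]
    · refine le_trans (le_of_eq ?_) (Finset.le_sup (f := fun k => tId ι i k + A k j)
        (Finset.mem_univ i))
      simp [tId]
  mul_one A := by
    change tmul A (tId ι) = A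
    funext i j
    refine le_antisymm (Finset.sup_le fun k _ => ?_) ?_
    · rcases eq_or_ne k j with rfl | h
      · simp [tId]
      · simp [tId, h]
    · refine le_trans (le_of_eq ?_) (Finset.le_sup (f := fun k => A i k + tId ι k j)
        (Finset.mem_univ j))
      simp [tId]

theorem mul_apply (A B : TropMatrix ι) (i j : ι) :
    (A * B) i j = Finset.univ.sup fun k => A i k + B k j :=
  rfl

theorem one_apply (i j : ι) : (1 : TropMatrix ι) i j = if i = j then 0 else ⊥ :=
  rfl

theorem add_le_mul_apply (A B : TropMatrix ι) (i k j : ι) : A i k + B k j ≤ (A * B) i j :=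
  Finset.le_sup (f := fun k => A i k + B k j) (Finset.mem_univ k)

theorem mul_apply_le_iff {A B : TropMatrix ι} {i j : ι} {r : Trop} :
    (A * B) i j ≤ r ↔ ∀ k, A i k + B k j ≤ r := by
  simp [mul_apply]

theorem add_mul_apply_le_iff {A B : TropMatrix ι} {i j : ι} {c r : Trop} :
    c + (A * B) i j ≤ r ↔ ∀ k, c + A i k + B k j ≤ r := by
  simp [mul_apply, Trop.add_sup, add_assoc]

theorem add_add_le_add_mul_apply (c : Trop) (A B : TropMatrix ι) (i k j : ι) :
    c + A i k + B k j ≤ c + (A * B) i j :=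
  add_mul_apply_le_iff.1 le_rfl k

theorem evalWord_eq_evalM (w : List Bool) (X Y : TropMatrix ι) :
    evalWord w X Y = evalM w X Y := by
  rw [evalM, List.prod_eq_foldr]
  rfl

theorem evalM_mono {X X' Y Y' : TropMatrix ι} (hX : ∀ i j, X i j ≤ X' i j)
    (hY : ∀ i j, Y i j ≤ Y' i j) (w : List Bool) (i j : ι) :
    evalM w X Y i j ≤ evalM w X' Y' i j := by
  induction w generalizing i with
  | nil => exact le_rfl
  | cons c w ih =>
    rw [evalM_cons, evalM_cons, mul_apply_le_iff]
    refine fun k => le_trans (add_le_add ?_ (ih k)) (add_le_mul_apply _ _ i k j)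
    cases c
    exacts [hY i k, hX i k]

theorem evalM_apply_of_closed {κ : Type*} [Fintype κ] [DecidableEq κ] {e : κ → ι}
    (he : Function.Injective e) {X Y : TropMatrix ι} (hX : ∀ i, ∀ k ∉ Set.range e, X (e i) k = ⊥)
    (hY : ∀ i, ∀ k ∉ Set.range e, Y (e i) k = ⊥) (w : List Bool) (i j : κ) :
    evalM w X Y (e i) (e j) = evalM w (restrict e X) (restrict e Y) i j := by
  induction w generalizing i with
  | nil => simp [evalM, one_apply, he.eq_iff]
  | cons c w ih =>
    rw [evalM_cons, evalM_cons]
    apply le_antisymm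
    · refine mul_apply_le_iff.2 fun k => ?_
      by_cases hk : k ∈ Set.range e
      · obtain ⟨k, rfl⟩ := hk
        rw [ih]
        refine le_trans (le_of_eq ?_) (add_le_mul_apply _ _ i k j)
        cases c <;> rfl
      · cases c <;> simp [hX i k hk, hY i k hk]
    · refine mul_apply_le_iff.2 fun k => ?_
      rw [← ih]
      refine le_trans (le_of_eq ?_) (add_le_mul_apply _ _ (e i) (e k) (e j))
      cases c <;> rfl

theorem evalM_apply_eq_bot_of_closed {m : ι} {X Y : TropMatrix ι} (hX : ∀ i ≠ m, X i m = ⊥)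
    (hY : ∀ i ≠ m, Y i m = ⊥) (w : List Bool) {i : ι} (hi : i ≠ m) : evalM w X Y i m = ⊥ := by
  induction w generalizing i with
  | nil => exact if_neg hi
  | cons c w ih =>
    rw [evalM_cons, ← le_bot_iff, mul_apply_le_iff]
    intro k
    rcases eq_or_ne k m with rfl | hk
    · cases c <;> simp [hX i hi, hY i hi]
    · simp [ih hk]

end Monoid

section UpperTriangular

variable {n : ℕ}

theorem isUT_one : IsUT (1 : TropMatrix (Fin n)) :=
  fun _ _ h => if_neg (Fin.ne_of_gt h)

theorem isUT_mul {A B : TropMatrix (Fin n)} (hA : IsUT A) (hB : IsUT B) :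
    IsUT (A * B : TropMatrix (Fin n)) := by
  intro i j hij
  refine le_bot_iff.1 (mul_apply_le_iff.2 fun k => ?_)
  rcases lt_or_ge k i with hk | hk
  · simp [hA i k hk]
  · simp [hB k j (hij.trans_le hk)]

theorem isUT_avoid (m : Fin n) {X : TropMatrix (Fin n)} (hX : IsUT X) : IsUT (avoid m X) :=
  fun i j hij => le_bot_iff.1 ((avoid_le m X i j).trans (hX i j hij).le)

theorem mul_apply_self {A B : TropMatrix (Fin n)} (hA : IsUT A) (hB : IsUT B) (i : Fin n) :
    (A * B) i i = A i i + B i i := by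
  refine le_antisymm (mul_apply_le_iff.2 fun k => ?_) (add_le_mul_apply A B i i i)
  rcases lt_trichotomy k i with h | rfl | h
  · simp [hA i k h]
  · rfl
  · simp [hB k i h]

theorem evalM_avoid_apply_of_lt {X Y : TropMatrix (Fin n)} (hX : IsUT X) (hY : IsUT Y)
    (w : List Bool) {m i : Fin n} (hi : m < i) (j : Fin n) :
    evalM w X Y i j ≤ evalM w (avoid m X) (avoid m Y) i j := by
  induction w generalizing i with
  | nil => exact le_rfl
  | cons c w ih =>
    rw [evalM_cons, evalM_cons, mul_apply_le_iff]
    intro k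
    rcases lt_or_ge m k with hk | hk
    · refine le_trans (add_le_add (le_of_eq ?_) (ih hk)) (add_le_mul_apply _ _ i k j)
      cases c <;> exact (avoid_apply_of_ne _ hi.ne' hk.ne').symm
    · cases c <;> simp [hX i k (hk.trans_lt hi), hY i k (hk.trans_lt hi)]

end UpperTriangular

end TropMatrix

namespace TropMatrix

section KeyLemma

variable {n : ℕ} {X Y : TropMatrix (Fin (n + 2))}

theorem add_block_apply_le {S T : TropMatrix (Fin (n + 2))} (hT : IsUT T) {p q : Trop}
    (hS01 : p + S 0 1 ≤ q + S 1 1) (hT01 : p + S 0 0 + T 0 1 ≤ q + (S 1 1 + T 1 1))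
    (k : Fin (n + 2)) :
    p + (S * T) 0 k ≤ max (p + (avoid 1 S * avoid 1 T) 0 k) (q + (S * T) 1 k) := by
  refine add_mul_apply_le_iff.2 fun m => ?_
  rcases eq_or_ne m 1 with rfl | hm
  · refine le_max_of_le_right ?_
    calc p + S 0 1 + T 1 k ≤ q + S 1 1 + T 1 k := by gcongr
      _ ≤ q + (S * T) 1 k := add_add_le_add_mul_apply q S T 1 1 k
  rcases eq_or_ne k 1 with rfl | hk
  · rcases eq_or_ne m 0 with rfl | hm0
    · refine le_max_of_le_right (hT01.trans ?_)
      gcongr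
      exact add_le_mul_apply S T 1 1 1
    · have hm1 : (1 : Fin (n + 2)) < m := by
        simp only [ne_eq, Fin.ext_iff, Fin.lt_def, Fin.val_zero, Fin.val_one] at hm hm0 ⊢
        omega
      simp [hT m 1 hm1]
  · refine le_max_of_le_left ?_
    rw [← avoid_apply_of_ne S Fin.zero_ne_one hm, ← avoid_apply_of_ne T hm hk]
    exact add_add_le_add_mul_apply p _ _ 0 m k

theorem evalM_pair_apply_self (hX : IsUT X) (hY : IsUT Y) (c : Bool) (i : Fin (n + 2)) :
    evalM [c, !c] X Y i i = X i i + Y i i := by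
  cases c
  · exact (congr_fun₂ (evalM_pair false true X Y) i i).trans
      ((mul_apply_self hY hX i).trans (add_comm _ _))
  · exact (congr_fun₂ (evalM_pair true false X Y) i i).trans (mul_apply_self hX hY i)

/-- A path from `0` after a prefix of weight `p` either avoids `1` or is dominated by a path from
`1` after a prefix of weight `q`. -/
theorem add_evalM_substAbBa_apply_le (hX : IsUT X) (hY : IsUT Y)
    (hdiag : X 0 0 + Y 0 0 ≤ X 1 1 + Y 1 1) {p q : Trop}
    (hblock : ∀ c k, p + evalM [c, !c] X Y 0 k ≤
      max (p + evalM [c, !c] (avoid 1 X) (avoid 1 Y) 0 k) (q + evalM [c, !c] X Y 1 k))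
    (u : List Bool) (l : Fin (n + 2)) :
    p + evalM (substAbBa u) X Y 0 l ≤
      max (p + evalM (substAbBa u) (avoid 1 X) (avoid 1 Y) 0 l)
        (q + evalM (substAbBa u) X Y 1 l) := by
  induction u with
  | nil => exact le_max_of_le_left le_rfl
  | cons c u ih =>
    simp only [substAbBa_cons, evalM_append]
    set B := evalM [c, !c] X Y
    set B' := evalM [c, !c] (avoid 1 X) (avoid 1 Y)
    set U := evalM (substAbBa u) X Y
    set U' := evalM (substAbBa u) (avoid 1 X) (avoid 1 Y)
    have through_one (k) : q + B 1 k + U k l ≤ q + (B * U) 1 l :=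
      add_add_le_add_mul_apply q B U 1 k l
    have avoiding (k) : p + B' 0 k + U' k l ≤ p + (B' * U') 0 l :=
      add_add_le_add_mul_apply p B' U' 0 k l
    have hB'B : B' 0 0 ≤ B 1 1 := by
      calc B' 0 0 ≤ B 0 0 := evalM_mono (avoid_le 1 X) (avoid_le 1 Y) _ 0 0
        _ = X 0 0 + Y 0 0 := evalM_pair_apply_self hX hY c 0
        _ ≤ X 1 1 + Y 1 1 := hdiag
        _ = B 1 1 := (evalM_pair_apply_self hX hY c 1).symm
    refine add_mul_apply_le_iff.2 fun k => ?_
    refine (add_le_add_left (hblock c k) _).trans ?_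
    rw [max_add]
    refine max_le ?_ (le_max_of_le_right (through_one k))
    rcases lt_trichotomy k 1 with hk | rfl | hk
    · obtain rfl : k = 0 := (Fin.lt_one_iff k).1 hk
      calc p + B' 0 0 + U 0 l = B' 0 0 + (p + U 0 l) := by abel
        _ ≤ B' 0 0 + max (p + U' 0 l) (q + U 1 l) := by gcongr
        _ = max (p + B' 0 0 + U' 0 l) (q + B' 0 0 + U 1 l) := by
          rw [add_max]
          congr 1 <;> abel
        _ ≤ max (p + (B' * U') 0 l) (q + (B * U) 1 l) := by
          refine max_le_max (avoiding 0) (le_trans ?_ (through_one 1))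
          gcongr
    · have hB'01 : B' 0 1 = ⊥ :=
        evalM_apply_eq_bot_of_closed (fun i _ => avoid_apply_right 1 X i)
          (fun i _ => avoid_apply_right 1 Y i) _ Fin.zero_ne_one
      calc p + B' 0 1 + U 1 l = ⊥ := by simp only [hB'01, WithBot.add_bot, WithBot.bot_add]
        _ ≤ _ := bot_le
    · refine le_max_of_le_left (le_trans ?_ (avoiding k))
      gcongr
      exact evalM_avoid_apply_of_lt hX hY _ hk l

theorem block_edges_le (hX : IsUT X) (hY : IsUT Y) (hdiag : X 0 0 + Y 0 0 ≤ X 1 1 + Y 1 1)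
    (c : Bool) (k : Fin (n + 2)) :
    (X 0 0 + Y 0 0) + (X 0 0 + Y 0 0) + evalM [c, !c] X Y 0 k ≤
      max ((X 0 0 + Y 0 0) + (X 0 0 + Y 0 0) + evalM [c, !c] (avoid 1 X) (avoid 1 Y) 0 k)
        ((X * Y * (Y * X)) 0 1 + evalM [c, !c] X Y 1 k) := by
  set P := X * Y * (Y * X)
  have le_P : ∀ {k m m'}, X 0 k + Y k m + (Y m m' + X m' 1) ≤ P 0 1 := fun {k m m'} =>
    le_trans (add_le_add (add_le_mul_apply X Y 0 k m) (add_le_mul_apply Y X m m' 1))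
      (add_le_mul_apply (X * Y) (Y * X) 0 m 1)
  cases c
  · rw [evalM_pair, evalM_pair]
    refine add_block_apply_le hX ?_ ?_ k
    · calc (X 0 0 + Y 0 0) + (X 0 0 + Y 0 0) + Y 0 1
          ≤ (X 0 0 + Y 0 0) + (X 1 1 + Y 1 1) + Y 0 1 := by gcongr
        _ = X 0 0 + Y 0 0 + (Y 0 1 + X 1 1) + Y 1 1 := by abel
        _ ≤ P 0 1 + Y 1 1 := by gcongr; exact le_P
    · calc (X 0 0 + Y 0 0) + (X 0 0 + Y 0 0) + Y 0 0 + X 0 1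
          = X 0 0 + Y 0 0 + (Y 0 0 + X 0 1) + (X 0 0 + Y 0 0) := by abel
        _ ≤ P 0 1 + (X 1 1 + Y 1 1) := by gcongr; exact le_P
        _ = P 0 1 + (Y 1 1 + X 1 1) := by abel
  · rw [evalM_pair, evalM_pair]
    refine add_block_apply_le hY ?_ ?_ k
    · calc (X 0 0 + Y 0 0) + (X 0 0 + Y 0 0) + X 0 1
          ≤ (X 1 1 + Y 1 1) + (X 1 1 + Y 1 1) + X 0 1 := by gcongr
        _ = X 0 1 + Y 1 1 + (Y 1 1 + X 1 1) + X 1 1 := by abel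
        _ ≤ P 0 1 + X 1 1 := by gcongr; exact le_P
    · calc (X 0 0 + Y 0 0) + (X 0 0 + Y 0 0) + X 0 0 + Y 0 1
          ≤ (X 1 1 + Y 1 1) + (X 1 1 + Y 1 1) + X 0 0 + Y 0 1 := by gcongr
        _ = X 0 0 + Y 0 1 + (Y 1 1 + X 1 1) + (X 1 1 + Y 1 1) := by abel
        _ ≤ P 0 1 + (X 1 1 + Y 1 1) := by gcongr; exact le_P

end KeyLemma

/-- The words `w` and `w'` form an identity satisfied by the upper triangular tropical matrices
of size `n`. -/
def UTSatisfies (n : ℕ) (w w' : List Bool) : Prop :=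
  ∀ X Y : TropMatrix (Fin n), IsUT X → IsUT Y → evalM w X Y = evalM w' X Y

namespace UTSatisfies

variable {n : ℕ}

theorem evalM_apply_eq {w w' : List Bool} (h : UTSatisfies n w w')
    {X Y : TropMatrix (Fin (n + 1))} (hX : IsUT X) (hY : IsUT Y) {m : Fin (n + 1)}
    (hXm : ∀ i ≠ m, X i m = ⊥) (hYm : ∀ i ≠ m, Y i m = ⊥) {i : Fin (n + 1)} (hi : i ≠ m)
    (j : Fin (n + 1)) : evalM w X Y i j = evalM w' X Y i j := by
  rcases eq_or_ne j m with rfl | hj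
  · rw [evalM_apply_eq_bot_of_closed hXm hYm w hi, evalM_apply_eq_bot_of_closed hXm hYm w' hi]
  · obtain ⟨i, rfl⟩ := Fin.exists_succAbove_eq hi
    obtain ⟨j, rfl⟩ := Fin.exists_succAbove_eq hj
    have closed : ∀ {Z : TropMatrix (Fin (n + 1))}, (∀ i ≠ m, Z i m = ⊥) →
        ∀ i, ∀ k ∉ Set.range m.succAbove, Z (m.succAbove i) k = ⊥ := fun hZ i k hk => by
      obtain rfl : k = m := by simpa [Fin.range_succAbove] using hk
      exact hZ _ (Fin.succAbove_ne k i)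
    have isUT_restrict : ∀ {Z : TropMatrix (Fin (n + 1))}, IsUT Z →
        IsUT (restrict m.succAbove Z) := fun hZ i j hij =>
      hZ _ _ (Fin.strictMono_succAbove m hij)
    rw [evalM_apply_of_closed Fin.succAbove_right_injective (closed hXm) (closed hYm),
      evalM_apply_of_closed Fin.succAbove_right_injective (closed hXm) (closed hYm),
      h _ _ (isUT_restrict hX) (isUT_restrict hY)]

theorem symm {w w' : List Bool} (h : UTSatisfies n w w') : UTSatisfies n w' w :=
  fun X Y hX hY => (h X Y hX hY).symm

variable {u v : List Bool} {X Y : TropMatrix (Fin (n + 2))}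

theorem abba_mul_evalM_le (h : UTSatisfies (n + 1) (substAbBa u) (substAbBa v)) (hX : IsUT X)
    (hY : IsUT Y) (hdiag : X 0 0 + Y 0 0 ≤ X 1 1 + Y 1 1) (i j : Fin (n + 2)) :
    (X * Y * (Y * X) * evalM (substAbBa u) X Y) i j ≤
      (X * Y * (Y * X) * evalM (substAbBa v) X Y) i j := by
  set P := X * Y * (Y * X)
  have hP : IsUT P := isUT_mul (isUT_mul hX hY) (isUT_mul hY hX)
  have off_zero : ∀ k ≠ 0, evalM (substAbBa u) X Y k j = evalM (substAbBa v) X Y k j := fun k hk =>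
    h.evalM_apply_eq hX hY (fun i hi => hX i 0 (Fin.pos_of_ne_zero hi))
      (fun i hi => hY i 0 (Fin.pos_of_ne_zero hi)) hk j
  refine mul_apply_le_iff.2 fun k => ?_
  rcases eq_or_ne k 0 with rfl | hk
  · rcases eq_or_ne i 0 with rfl | hi
    · have hP00 : P 0 0 = (X 0 0 + Y 0 0) + (X 0 0 + Y 0 0) :=
        (mul_apply_self (isUT_mul hX hY) (isUT_mul hY hX) 0).trans (by
          rw [mul_apply_self hX hY, mul_apply_self hY hX, add_comm (Y 0 0)])
      rw [hP00]
      refine (add_evalM_substAbBa_apply_le hX hY hdiag (block_edges_le hX hY hdiag) u j).trans ?_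
      rw [h.evalM_apply_eq (isUT_avoid 1 hX) (isUT_avoid 1 hY)
        (fun i _ => avoid_apply_right 1 X i) (fun i _ => avoid_apply_right 1 Y i)
        Fin.zero_ne_one j, off_zero 1 Fin.zero_ne_one.symm, ← hP00]
      refine max_le (le_trans ?_ (add_le_mul_apply P _ 0 0 j)) (add_le_mul_apply P _ 0 1 j)
      gcongr
      exact evalM_mono (avoid_le 1 X) (avoid_le 1 Y) _ 0 j
    · simp [hP i 0 (Fin.pos_of_ne_zero hi)]
  · rw [off_zero k hk]
    exact add_le_mul_apply P _ i k j

theorem abba_mul_evalM_eq (h : UTSatisfies (n + 1) (substAbBa u) (substAbBa v)) (hX : IsUT X)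
    (hY : IsUT Y) (hdiag : X 0 0 + Y 0 0 ≤ X 1 1 + Y 1 1) :
    X * Y * (Y * X) * evalM (substAbBa u) X Y = X * Y * (Y * X) * evalM (substAbBa v) X Y :=
  funext₂ fun i j => le_antisymm (h.abba_mul_evalM_le hX hY hdiag i j)
    (h.symm.abba_mul_evalM_le hX hY hdiag i j)

end UTSatisfies

section Antitranspose

variable {n : ℕ}

/-- The reflection in the antidiagonal, an anti-automorphism of the upper triangular matrices. -/
def antitranspose (X : TropMatrix (Fin n)) : TropMatrix (Fin n) :=
  fun i j => X j.rev i.rev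

theorem antitranspose_involutive : Function.Involutive (antitranspose (n := n)) := fun X => by
  funext i j
  simp only [antitranspose, Fin.rev_rev]

theorem antitranspose_mul (A B : TropMatrix (Fin n)) :
    antitranspose (A * B) = antitranspose B * antitranspose A := by
  funext i j
  simp only [antitranspose, mul_apply, add_comm (A _ _)]
  rw [← Finset.map_univ_equiv Fin.revPerm, Finset.sup_map]
  simp [Function.comp_def]

theorem isUT_antitranspose {X : TropMatrix (Fin n)} (hX : IsUT X) : IsUT (antitranspose X) :=
  fun _ _ hij => hX _ _ (Fin.rev_lt_rev.2 hij)

theorem evalM_antitranspose (w : List Bool) (X Y : TropMatrix (Fin n)) :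
    evalM w (antitranspose X) (antitranspose Y) = antitranspose (evalM w.reverse X Y) := by
  induction w with
  | nil =>
    funext i j
    simp [evalM, antitranspose, one_apply, eq_comm]
  | cons c w ih =>
    rw [evalM_cons, List.reverse_cons, evalM_append, antitranspose_mul, ← ih]
    cases c <;> simp [evalM]

end Antitranspose

namespace UTSatisfies

variable {n : ℕ}

theorem reverse {w w' : List Bool} (h : UTSatisfies n w w') :
    UTSatisfies n w.reverse w'.reverse := fun X Y hX hY =>
  antitranspose_involutive.injective <| by
    rw [← evalM_antitranspose, ← evalM_antitranspose,
      h _ _ (isUT_antitranspose hX) (isUT_antitranspose hY)]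

theorem evalM_mul_abba_eq {u v : List Bool} (h : UTSatisfies (n + 1) (substAbBa u) (substAbBa v))
    {X Y : TropMatrix (Fin (n + 2))} (hX : IsUT X) (hY : IsUT Y)
    (hdiag : X (Fin.rev 0) (Fin.rev 0) + Y (Fin.rev 0) (Fin.rev 0) ≤
      X (Fin.rev 1) (Fin.rev 1) + Y (Fin.rev 1) (Fin.rev 1)) :
    evalM (substAbBa u) X Y * (X * Y * (Y * X)) = evalM (substAbBa v) X Y * (X * Y * (Y * X)) := by
  refine antitranspose_involutive.injective ?_
  have h' := h.reverse
  rw [reverse_substAbBa, reverse_substAbBa] at h'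
  have key := h'.abba_mul_evalM_eq (isUT_antitranspose hX) (isUT_antitranspose hY) hdiag
  rw [← reverse_substAbBa, ← reverse_substAbBa, evalM_antitranspose, evalM_antitranspose,
    List.reverse_reverse, List.reverse_reverse] at key
  simp only [antitranspose_mul, mul_assoc] at key ⊢
  exact key

end UTSatisfies

end TropMatrix

section ChainScore

variable {α : Type*} [DecidableEq α] {n : ℕ}

/-- The multiplicity `1` or `0` with which the letter `x` counts at the node `C i`. -/
def weight (C : Fin n → Finset α) (x : α) (i : Fin n) : ℕ :=
  if x ∈ C i then 1 else 0

/-- One letter `x` of the dynamic programme computing `chainScore`. -/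
def chainScoreStep (C : Fin n → Finset α) (v : Fin n → ℕ) (x : α) (j : Fin n) : ℕ :=
  (Finset.Iic j).sup fun i => v i + weight C x i

/-- `chainScore C W j` is the greatest number of letters of the word `W` that can be counted when
each letter is assigned a node of the chain `C 0, …, C j` in a weakly increasing way and counts if
it lies in its node. -/
def chainScore (C : Fin n → Finset α) (W : List α) : Fin n → ℕ :=
  W.foldl (chainScoreStep C) 0

theorem chainScore_append_singleton (C : Fin n → Finset α) (W : List α) (x : α) :
    chainScore C (W ++ [x]) = chainScoreStep C (chainScore C W) x :=
  List.foldl_append ..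

theorem monotone_chainScore (C : Fin n → Finset α) (W : List α) : Monotone (chainScore C W) := by
  rcases W.eq_nil_or_concat' with rfl | ⟨W, x, rfl⟩
  · exact monotone_const
  · rw [chainScore_append_singleton]
    exact fun i j hij => Finset.sup_mono (Finset.Iic_subset_Iic.2 hij)

theorem chainScore_append_singleton_zero (C : Fin (n + 1) → Finset α) (W : List α) (x : α) :
    chainScore C (W ++ [x]) 0 = chainScore C W 0 + weight C x 0 := by
  have Iic_zero : Finset.Iic (0 : Fin (n + 1)) = {0} := Finset.Iic_bot
  simp [chainScore_append_singleton, chainScoreStep, Iic_zero]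

theorem chainScore_append_singleton_succ (C : Fin (n + 1) → Finset α) (W : List α) (x : α)
    (j : Fin n) :
    chainScore C (W ++ [x]) j.succ =
      if x ∈ C j.succ then chainScore C W j.succ + 1
      else max (chainScore C W j.succ) (chainScore C (W ++ [x]) j.castSucc) := by
  have Iic_succ : Finset.Iic j.succ = insert j.succ (Finset.Iic j.castSucc) := by
    ext k
    simp only [Finset.mem_Iic, Finset.mem_insert, Fin.le_def, Fin.ext_iff, Fin.val_succ,
      Fin.val_castSucc]
    omega
  rw [chainScore_append_singleton, chainScoreStep, Iic_succ, Finset.sup_insert]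
  split_ifs with hx
  · rw [weight, if_pos hx]
    refine sup_eq_left.2 (Finset.sup_le fun i hi => add_le_add ?_ ?_)
    · exact monotone_chainScore C W ((Finset.mem_Iic.1 hi).trans Fin.castSucc_lt_succ.le)
    · rw [weight]
      split_ifs <;> simp
  · rw [weight, if_neg hx]
    rfl

theorem chainScore_congr {C C' : Fin n → Finset α} {i : Fin n} (h : ∀ j ≤ i, C j = C' j)
    (W : List α) : chainScore C W i = chainScore C' W i := by
  induction W using List.reverseRecOn generalizing i with
  | nil => rfl
  | append_singleton W x ih =>
    rw [chainScore_append_singleton, chainScore_append_singleton]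
    refine Finset.sup_congr rfl fun j hj => ?_
    have hji := Finset.mem_Iic.1 hj
    rw [ih fun k hk => h k (hk.trans hji), weight, weight, h j hji]

end ChainScore

namespace TropMatrix

section ChainRep

variable {α : Type*} [DecidableEq α] {n : ℕ}

/-- The matrix of a letter in the representation along the chain `C`. -/
def letterMatrix (C : Fin n → Finset α) (x : α) : TropMatrix (Fin n) :=
  fun i j => if i ≤ j then ((weight C x i : ℝ) : Trop) else ⊥

/-- The block along the chain `C` of the Johnson–Kambites representation. -/
def chainRep (C : Fin n → Finset α) : FreeMonoid α →* TropMatrix (Fin n) :=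
  FreeMonoid.lift (letterMatrix C)

theorem chainRep_of (C : Fin n → Finset α) (x : α) :
    chainRep C (FreeMonoid.of x) = letterMatrix C x :=
  FreeMonoid.lift_eval_of _ _

theorem chainRep_of_mul (C : Fin n → Finset α) (x : α) (W : FreeMonoid α) :
    chainRep C (FreeMonoid.of x * W) = letterMatrix C x * chainRep C W := by
  rw [map_mul, chainRep_of]

theorem isUT_letterMatrix (C : Fin n → Finset α) (x : α) : IsUT (letterMatrix C x) :=
  fun _ _ hij => if_neg (not_le.2 hij)

theorem isUT_chainRep (C : Fin n → Finset α) (W : FreeMonoid α) : IsUT (chainRep C W) := by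
  induction W using FreeMonoid.inductionOn' with
  | one => simpa using isUT_one
  | of_mul x W ih =>
    rw [chainRep_of_mul]
    exact isUT_mul (isUT_letterMatrix C x) ih

theorem chainRep_apply_self (C : Fin n → Finset α) (W : FreeMonoid α) (i : Fin n) :
    chainRep C W i i = (((W.toList.map (weight C · i)).sum : ℝ) : Trop) := by
  induction W using FreeMonoid.inductionOn' with
  | one => simp [one_apply]
  | of_mul x W ih =>
    rw [chainRep_of_mul, mul_apply_self (isUT_letterMatrix C x) (isUT_chainRep C W), ih]
    simp [letterMatrix]

/-- The maximum of the `j`-th column of a tropical matrix. -/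
def colSup (A : TropMatrix (Fin n)) (j : Fin n) : Trop :=
  Finset.univ.sup fun i => A i j

theorem colSup_mul (A B : TropMatrix (Fin n)) (j : Fin n) :
    colSup (A * B) j = Finset.univ.sup fun k => colSup A k + B k j := by
  simp only [colSup, mul_apply, Trop.sup_add]
  exact Finset.sup_comm _ _ _

theorem colSup_one (j : Fin n) : colSup (1 : TropMatrix (Fin n)) j = 0 := by
  simp [colSup, one_apply, Finset.sup_ite, Finset.filter_eq']

theorem sup_add_letterMatrix (C : Fin n → Finset α) (v : Fin n → ℕ) (x : α) (j : Fin n) :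
    (Finset.univ.sup fun k => ((v k : ℝ) : Trop) + letterMatrix C x k j) =
      ((chainScoreStep C v x j : ℝ) : Trop) := by
  calc (Finset.univ.sup fun k => ((v k : ℝ) : Trop) + letterMatrix C x k j)
      = (Finset.univ.filter (· ≤ j)).sup fun k => (((v k + weight C x k : ℕ) : ℝ) : Trop) := by
        simp [letterMatrix, add_ite, Finset.sup_ite]
    _ = (Finset.Iic j).sup fun k => (((v k + weight C x k : ℕ) : ℝ) : Trop) := by
        rw [Finset.filter_ge_eq_Iic]
    _ = ((chainScoreStep C v x j : ℝ) : Trop) :=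
        (Finset.apply_sup_eq_sup_comp_of_nonempty (g := fun m : ℕ => ((m : ℝ) : Trop))
          (WithBot.coe_strictMono.monotone.comp Nat.mono_cast) ⟨j, Finset.mem_Iic.2 le_rfl⟩).symm

theorem colSup_chainRep (C : Fin n → Finset α) (W : List α) (j : Fin n) :
    colSup (chainRep C (FreeMonoid.ofList W)) j = ((chainScore C W j : ℝ) : Trop) := by
  induction W using List.reverseRecOn generalizing j with
  | nil => simpa [chainScore] using colSup_one j
  | append_singleton W x ih =>
    rw [FreeMonoid.ofList_append, map_mul, FreeMonoid.ofList_singleton, colSup_mul,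
      chainScore_append_singleton, ← sup_add_letterMatrix]
    simp only [ih, chainRep_of]

theorem chainScore_eq_of_chainRep_eq {C : Fin n → Finset α} {W W' : FreeMonoid α}
    (h : chainRep C W = chainRep C W') : chainScore C W.toList = chainScore C W'.toList := by
  funext j
  have hj : ((chainScore C W.toList j : ℝ) : Trop) = (chainScore C W'.toList j : ℝ) := by
    rw [← colSup_chainRep, ← colSup_chainRep, FreeMonoid.ofList_toList, FreeMonoid.ofList_toList, h]
  exact_mod_cast hj

end ChainRep

section Identities

variable {α : Type*} [DecidableEq α] {n : ℕ} {u v : List Bool}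

theorem chainRep_evalM_eq_of_utSatisfies (h : UTSatisfies n (substAbBa u) (substAbBa v))
    (C : Fin n → Finset α) (X Y : FreeMonoid α) :
    chainRep C (evalM (substAbBa ([true, false] ++ u ++ [true, false])) X Y) =
      chainRep C (evalM (substAbBa ([true, false] ++ v ++ [true, false])) X Y) := by
  simp only [map_evalM (chainRep C), substAbBa_ab_append_ab]
  rw [evalM_append, evalM_append, evalM_append, evalM_append,
    h _ _ (isUT_chainRep C X) (isUT_chainRep C Y)]

theorem chainRep_evalM_eq_of_balanced (h : UTSatisfies (n + 1) (substAbBa u) (substAbBa v))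
    {C : Fin (n + 2) → Finset α}
    (hC : ∀ x, weight C x 0 + weight C x (Fin.rev 0) = weight C x 1 + weight C x (Fin.rev 1))
    (X Y : FreeMonoid α) :
    chainRep C (evalM (substAbBa ([true, false] ++ u ++ [true, false])) X Y) =
      chainRep C (evalM (substAbBa ([true, false] ++ v ++ [true, false])) X Y) := by
  have balanced (W : List α) :
      (W.map (weight C · 0)).sum + (W.map (weight C · (Fin.rev 0))).sum =
        (W.map (weight C · 1)).sum + (W.map (weight C · (Fin.rev 1))).sum := by
    simp only [← List.sum_map_add, hC]
  have diag (i : Fin (n + 2)) : chainRep C X i i + chainRep C Y i i =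
      (((X.toList.map (weight C · i)).sum + (Y.toList.map (weight C · i)).sum : ℕ) : ℝ) := by
    rw [chainRep_apply_self, chainRep_apply_self]
    norm_cast
  have hX := isUT_chainRep C X
  have hY := isUT_chainRep C Y
  have ends : chainRep C X 0 0 + chainRep C Y 0 0 ≤ chainRep C X 1 1 + chainRep C Y 1 1 ∨
      chainRep C X (Fin.rev 0) (Fin.rev 0) + chainRep C Y (Fin.rev 0) (Fin.rev 0) ≤
        chainRep C X (Fin.rev 1) (Fin.rev 1) + chainRep C Y (Fin.rev 1) (Fin.rev 1) := by
    simp only [diag, WithBot.coe_le_coe, Nat.cast_le]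
    have := balanced X.toList
    have := balanced Y.toList
    omega
  rw [map_evalM, map_evalM, substAbBa_ab_append_ab, substAbBa_ab_append_ab, evalM_append,
    evalM_append, evalM_append, evalM_append, evalM_abba]
  rcases ends with left | right
  · rw [h.abba_mul_evalM_eq hX hY left]
  · rw [mul_assoc, h.evalM_mul_abba_eq hX hY right, ← mul_assoc]

end Identities

end TropMatrix

section Insertion

variable {α : Type*} [LinearOrder α]

/-- The Knuth relations for the letters `s a` of a monoid, that is, what it takes for `s` to factor
through the plactic monoid over `α`. -/
structure IsPlactic {M : Type*} [Monoid M] (s : α → M) : Prop where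
  knuth₁ : ∀ {a b c : α}, a < b → b ≤ c → s b * s c * s a = s b * s a * s c
  knuth₂ : ∀ {a b c : α}, a ≤ b → b < c → s c * s a * s b = s a * s c * s b

/-- The least letter of the row `R` greater than `x`, if there is one. -/
def bumped (x : α) (R : Multiset α) : Option α :=
  R.sort.find? (x < ·)

/-- The row `R` after Schensted insertion of the letter `x`. -/
def rowInsert (x : α) (R : Multiset α) : Multiset α :=
  x ::ₘ (bumped x R).elim R R.erase

/-- Schensted insertion of a letter, or of no letter at all, into a tableau, given as the list of
the multisets of letters of its rows. -/
def schenstedInsert : Option α → List (Multiset α) → List (Multiset α)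
  | none, T => T
  | some x, [] => [{x}]
  | some x, R :: T => rowInsert x R :: schenstedInsert (bumped x R) T

theorem sort_coe_of_pairwise {l : List α} (h : l.Pairwise (· ≤ ·)) : (l : Multiset α).sort = l :=
  List.mergeSort_eq_self _ h

theorem bumped_eq_none_iff {x : α} {R : Multiset α} : bumped x R = none ↔ ∀ r ∈ R, r ≤ x := by
  simp [bumped]

theorem exists_sort_eq_of_bumped_eq_some {x y : α} {R : Multiset α} (h : bumped x R = some y) :
    x < y ∧ ∃ A B, R.sort = A ++ y :: B ∧ ∀ a ∈ A, a ≤ x := by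
  simpa [bumped, List.find?_eq_some_iff_append] using h

theorem mem_of_bumped_eq_some {x y : α} {R : Multiset α} (h : bumped x R = some y) : y ∈ R := by
  obtain ⟨-, A, B, hR, -⟩ := exists_sort_eq_of_bumped_eq_some h
  rw [← Multiset.mem_sort (· ≤ ·), hR]
  simp

theorem le_of_bumped_eq_some {x y r : α} {R : Multiset α} (h : bumped x R = some y) (hr : r ∈ R)
    (hxr : x < r) : y ≤ r := by
  obtain ⟨-, A, B, hR, hA⟩ := exists_sort_eq_of_bumped_eq_some h
  have sorted : (A ++ y :: B).Pairwise (· ≤ ·) := hR ▸ Multiset.pairwise_sort R _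
  rw [← Multiset.mem_sort (· ≤ ·), hR, List.mem_append] at hr
  rcases hr with hrA | hrB
  · exact absurd (hA r hrA) hxr.not_ge
  · exact (List.pairwise_append.1 sorted).2.1.rel_head hrB

/-- The effect of Schensted insertion on one row, given by its multiplicities: `R` becomes `R'` by
receiving the letter `x` and passing on the letter `y`, if there are such letters. -/
structure RowInsertion (x y : Option α) (R R' : α → ℕ) : Prop where
  add_ite : ∀ r, R' r + (if y = some r then 1 else 0) = R r + (if x = some r then 1 else 0)
  exists_lt : ∀ b ∈ y, ∃ a ∈ x, a < b
  eq_zero : ∀ a ∈ x, ∀ r, a < r → (∀ b ∈ y, r < b) → R r = 0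

theorem rowInsertion_rowInsert (x : α) (R : Multiset α) :
    RowInsertion (some x) (bumped x R) (R.count ·) ((rowInsert x R).count ·) := by
  rcases h : bumped x R with _ | y
  · refine ⟨fun r => ?_, by simp, fun a ha r har _ => ?_⟩
    · simp [rowInsert, h, Multiset.count_cons, eq_comm]
    · obtain rfl := Option.mem_some.1 ha
      exact Multiset.count_eq_zero.2 fun hr => (bumped_eq_none_iff.1 h r hr).not_gt har
  · have hxy := (exists_sort_eq_of_bumped_eq_some h).1
    refine ⟨fun r => ?_, by simpa using hxy, fun a ha r har hry => ?_⟩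
    · have hy := Multiset.count_pos.2 (mem_of_bumped_eq_some h)
      simp only [rowInsert, h, Option.elim_some, Multiset.count_cons, Option.some.injEq,
        eq_comm (b := r)]
      by_cases hr : r = y
      · subst hr
        grind [Multiset.count_erase_self]
      · grind [Multiset.count_erase_of_ne]
    · obtain rfl := Option.mem_some.1 ha
      exact Multiset.count_eq_zero.2 fun hr =>
        (le_of_bumped_eq_some h hr har).not_gt (hry y rfl)

theorem exists_rowInsertion (x : Option α) (R : Multiset α) (T : List (Multiset α)) :
    ∃ y R', schenstedInsert x (R :: T) = R' :: schenstedInsert y T ∧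
      RowInsertion x y (R.count ·) (R'.count ·) := by
  rcases x with _ | x
  · exact ⟨none, R, by simp [schenstedInsert], by constructor <;> simp⟩
  · exact ⟨bumped x R, rowInsert x R, rfl, rowInsertion_rowInsert x R⟩

variable {M : Type*} [Monoid M] {s : α → M}

theorem IsPlactic.mul_prod_map_mul (hs : IsPlactic s) {x y : α} (hxy : x < y) {B : List α}
    (hB : (y :: B).Pairwise (· ≤ ·)) :
    s y * (B.map s).prod * s x = s y * s x * (B.map s).prod := by
  induction B generalizing y with
  | nil => simp
  | cons b B ih =>
    obtain ⟨hy, hB⟩ := List.pairwise_cons.1 hB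
    have hyb : y ≤ b := hy b List.mem_cons_self
    rw [List.map_cons, List.prod_cons, mul_assoc (s y), ih (hxy.trans_le hyb) hB, ← mul_assoc,
      ← mul_assoc, hs.knuth₁ hxy hyb, mul_assoc, mul_assoc]

theorem IsPlactic.prod_map_mul_mul (hs : IsPlactic s) {x y : α} (hxy : x < y) {A : List α}
    (hA : (A ++ [x]).Pairwise (· ≤ ·)) :
    (A.map s).prod * s y * s x = s y * (A.map s).prod * s x := by
  induction A using List.reverseRecOn generalizing x with
  | nil => simp
  | append_singleton A a ih =>
    obtain ⟨hA, -, hx⟩ := List.pairwise_append.1 hA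
    have hax : a ≤ x := hx a (by simp) x (by simp)
    rw [List.map_append, List.prod_append, List.map_singleton, List.prod_singleton]
    calc (A.map s).prod * s a * s y * s x = (A.map s).prod * (s a * s y * s x) := by
          simp only [mul_assoc]
      _ = (A.map s).prod * s y * s a * s x := by rw [← hs.knuth₂ hax hxy]; simp only [mul_assoc]
      _ = s y * ((A.map s).prod * s a) * s x := by
          rw [ih (hax.trans_lt hxy) hA]
          simp only [mul_assoc]

/-- The product of the letters of a row in weakly increasing order. -/
def rowProd (s : α → M) (R : Multiset α) : M :=
  (R.sort.map s).prod

/-- The product of the row reading word of a tableau, from the last row to the first. -/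
def tableauProd (s : α → M) : List (Multiset α) → M
  | [] => 1
  | R :: T => tableauProd s T * rowProd s R

theorem rowProd_coe_of_pairwise (s : α → M) {l : List α} (h : l.Pairwise (· ≤ ·)) :
    rowProd s (l : Multiset α) = (l.map s).prod := by
  rw [rowProd, sort_coe_of_pairwise h]

theorem rowProd_mul_of_forall_le {x : α} {R : Multiset α} (h : ∀ r ∈ R, r ≤ x) :
    rowProd s R * s x = rowProd s (x ::ₘ R) := by
  have sorted : (R.sort ++ [x]).Pairwise (· ≤ ·) := by
    simpa [List.pairwise_append] using h
  have hR : x ::ₘ R = ↑(R.sort ++ [x]) := by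
    rw [← Multiset.coe_add, Multiset.sort_eq, add_comm]
    rfl
  rw [hR, rowProd_coe_of_pairwise s sorted]
  simp [rowProd]

theorem IsPlactic.rowProd_mul_of_bumped (hs : IsPlactic s) {x y : α} {R : Multiset α}
    (h : bumped x R = some y) : rowProd s R * s x = s y * rowProd s (x ::ₘ R.erase y) := by
  obtain ⟨hxy, A, B, hR, hA⟩ := exists_sort_eq_of_bumped_eq_some h
  have sorted : (A ++ y :: B).Pairwise (· ≤ ·) := hR ▸ Multiset.pairwise_sort R _
  obtain ⟨hA', hyB, -⟩ := List.pairwise_append.1 sorted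
  obtain ⟨hy, hB⟩ := List.pairwise_cons.1 hyB
  have hx : ∀ b ∈ B, x ≤ b := fun b hb => hxy.le.trans (hy b hb)
  have hAx : (A ++ [x]).Pairwise (· ≤ ·) := by
    simpa [List.pairwise_append] using ⟨hA', hA⟩
  have sorted' : (A ++ x :: B).Pairwise (· ≤ ·) :=
    List.pairwise_append.2 ⟨hA', List.pairwise_cons.2 ⟨hx, hB⟩, fun a ha b hb =>
      (List.mem_cons.1 hb).elim (fun h => h ▸ hA a ha) fun hb => (hA a ha).trans (hx b hb)⟩
  have hR' : x ::ₘ R.erase y = ↑(A ++ x :: B) := by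
    rw [← Multiset.sort_eq R (· ≤ ·), hR, ← Multiset.coe_add, ← Multiset.coe_add,
      ← Multiset.cons_coe, ← Multiset.cons_coe, Multiset.add_cons, Multiset.add_cons,
      Multiset.erase_cons_head]
  rw [hR', rowProd_coe_of_pairwise s sorted', rowProd, hR]
  simp only [List.map_append, List.map_cons, List.prod_append, List.prod_cons]
  calc (A.map s).prod * (s y * (B.map s).prod) * s x
      = (A.map s).prod * (s y * (B.map s).prod * s x) := mul_assoc _ _ _
    _ = (A.map s).prod * s y * s x * (B.map s).prod := by
        rw [hs.mul_prod_map_mul hxy hyB]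
        simp only [mul_assoc]
    _ = s y * ((A.map s).prod * (s x * (B.map s).prod)) := by
        rw [hs.prod_map_mul_mul hxy hAx]
        simp only [mul_assoc]

theorem IsPlactic.tableauProd_schenstedInsert (hs : IsPlactic s) (x : α) (T : List (Multiset α)) :
    tableauProd s (schenstedInsert (some x) T) = tableauProd s T * s x := by
  induction T generalizing x with
  | nil => simp [schenstedInsert, tableauProd, rowProd]
  | cons R T ih =>
    rw [schenstedInsert, rowInsert, tableauProd, tableauProd, mul_assoc]
    rcases h : bumped x R with _ | y
    · rw [rowProd_mul_of_forall_le (bumped_eq_none_iff.1 h), schenstedInsert, Option.elim_none]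
    · rw [ih, mul_assoc, hs.rowProd_mul_of_bumped h, Option.elim_some]

end Insertion

section RankFour

/-- The chain of singletons. -/
def chain₁ : Fin 4 → Finset (Fin 4) :=
  ![{0}, {1}, {2}, {3}]

/-- The chain of pairs through `{0, 3}`. -/
def chain₂ : Fin 5 → Finset (Fin 4) :=
  ![{0, 1}, {0, 2}, {0, 3}, {1, 3}, {2, 3}]

/-- The chain of pairs through `{1, 2}`. -/
def chain₂' : Fin 5 → Finset (Fin 4) :=
  ![{0, 1}, {0, 2}, {1, 2}, {1, 3}, {2, 3}]

/-- The chain of triples. -/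
def chain₃ : Fin 4 → Finset (Fin 4) :=
  ![{0, 1, 2}, {0, 1, 3}, {0, 2, 3}, {1, 2, 3}]

/-- The constant chain at the set of all letters, whose scores are the length of the word. -/
def chain₄ : Fin 4 → Finset (Fin 4) :=
  fun _ => Finset.univ

/-- The scores of a word along the poset of pairs `{0, 1}`, `{0, 2}`, `{0, 3}`, `{1, 2}`, `{1, 3}`,
`{2, 3}`, in this order. Both maximal chains of this poset are needed, since `{0, 3}` and `{1, 2}`
are incomparable. -/
def pairScore (W : List (Fin 4)) : Fin 6 → ℕ :=
  ![chainScore chain₂ W 0, chainScore chain₂ W 1, chainScore chain₂ W 2, chainScore chain₂' W 2,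
    max (chainScore chain₂ W 3) (chainScore chain₂' W 3),
    max (chainScore chain₂ W 4) (chainScore chain₂' W 4)]

/-- The way in which the scores `p` of a word along the poset of pairs become `p'` when the letter
`x` is appended. -/
structure PairStep (x : Fin 4) (p p' : Fin 6 → ℕ) : Prop where
  score_01 : p' 0 = if x ∈ ({0, 1} : Finset (Fin 4)) then p 0 + 1 else p 0
  score_02 : p' 1 = if x ∈ ({0, 2} : Finset (Fin 4)) then p 1 + 1 else max (p 1) (p' 0)
  score_03 : p' 2 = if x ∈ ({0, 3} : Finset (Fin 4)) then p 2 + 1 else max (p 2) (p' 1)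
  score_12 : p' 3 = if x ∈ ({1, 2} : Finset (Fin 4)) then p 3 + 1 else max (p 3) (p' 1)
  score_13 : p' 4 =
    if x ∈ ({1, 3} : Finset (Fin 4)) then p 4 + 1 else max (p 4) (max (p' 2) (p' 3))
  score_23 : p' 5 = if x ∈ ({2, 3} : Finset (Fin 4)) then p 5 + 1 else max (p 5) (p' 4)

theorem pairStep_pairScore (W : List (Fin 4)) (x : Fin 4) :
    PairStep x (pairScore W) (pairScore (W ++ [x])) := by
  have step (i : Fin 4) := chainScore_append_singleton_succ chain₂ W x i
  have step' (i : Fin 4) := chainScore_append_singleton_succ chain₂' W x i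
  have common : chainScore chain₂' (W ++ [x]) 1 = chainScore chain₂ (W ++ [x]) 1 :=
    chainScore_congr (by decide) _
  have step₁₂ : chainScore chain₂' (W ++ [x]) 2 =
      if x ∈ ({1, 2} : Finset (Fin 4)) then chainScore chain₂' W 2 + 1
      else max (chainScore chain₂' W 2) (chainScore chain₂ (W ++ [x]) 1) :=
    common ▸ step' 1
  have max_step (c : Prop) [Decidable c] (a a' b b' : ℕ) :
      max (if c then a + 1 else max a a') (if c then b + 1 else max b b') =
        if c then max a b + 1 else max (max a b) (max a' b') := by
    split_ifs <;> omega
  exact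
    { score_01 := (chainScore_append_singleton_zero chain₂ W x).trans (add_ite ..)
      score_02 := step 0
      score_03 := step 1
      score_12 := step₁₂
      score_13 := (congr_arg₂ max (step 2) (step' 2)).trans (max_step ..)
      score_23 := (congr_arg₂ max (step 3) (step' 3)).trans (max_step ..) }

/-- The possible effects of Schensted insertion on a row over `Fin 4`: the letter inserted, the
letter passed on, and the multiplicities in the row before and after. -/
inductive RowInsertionFour :
    Option (Fin 4) → Option (Fin 4) → (Fin 4 → ℕ) → (Fin 4 → ℕ) → Prop
  | idle (a b c d) : RowInsertionFour none none ![a, b, c, d] ![a, b, c, d]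
  | zero (a) : RowInsertionFour (some 0) none ![a, 0, 0, 0] ![a + 1, 0, 0, 0]
  | zero_one (a b c d) : RowInsertionFour (some 0) (some 1) ![a, b + 1, c, d] ![a + 1, b, c, d]
  | zero_two (a c d) : RowInsertionFour (some 0) (some 2) ![a, 0, c + 1, d] ![a + 1, 0, c, d]
  | zero_three (a d) : RowInsertionFour (some 0) (some 3) ![a, 0, 0, d + 1] ![a + 1, 0, 0, d]
  | one (a b) : RowInsertionFour (some 1) none ![a, b, 0, 0] ![a, b + 1, 0, 0]
  | one_two (a b c d) : RowInsertionFour (some 1) (some 2) ![a, b, c + 1, d] ![a, b + 1, c, d]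
  | one_three (a b d) : RowInsertionFour (some 1) (some 3) ![a, b, 0, d + 1] ![a, b + 1, 0, d]
  | two (a b c) : RowInsertionFour (some 2) none ![a, b, c, 0] ![a, b, c + 1, 0]
  | two_three (a b c d) : RowInsertionFour (some 2) (some 3) ![a, b, c, d + 1] ![a, b, c + 1, d]
  | three (a b c d) : RowInsertionFour (some 3) none ![a, b, c, d] ![a, b, c, d + 1]

theorem RowInsertion.rowInsertionFour {x y : Option (Fin 4)} {R R' : Fin 4 → ℕ}
    (I : RowInsertion x y R R') : RowInsertionFour x y R R' := by
  obtain ⟨add, lt, eq⟩ := I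
  have eta (S : Fin 4 → ℕ) : ∃ a b c d, S = ![a, b, c, d] :=
    ⟨S 0, S 1, S 2, S 3, List.ofFn_inj.1 rfl⟩
  obtain ⟨a, b, c, d, rfl⟩ := eta R
  obtain ⟨a', b', c', d', rfl⟩ := eta R'
  rcases x with _ | x <;> rcases y with _ | y
  all_goals try fin_cases x
  all_goals try fin_cases y
  all_goals simp [Fin.forall_fin_succ] at add lt eq
  all_goals grind [RowInsertionFour]

/-- The way in which the scores `v` of a word along a chain of four nodes `A`, `B`, `C`, `D` become
`v'` when the letter `x` is appended. -/
structure ChainStep {α : Type*} [DecidableEq α] (A B C D : Finset α) (x : α)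
    (v v' : Fin 4 → ℕ) : Prop where
  score_0 : v' 0 = if x ∈ A then v 0 + 1 else v 0
  score_1 : v' 1 = if x ∈ B then v 1 + 1 else max (v 1) (v' 0)
  score_2 : v' 2 = if x ∈ C then v 2 + 1 else max (v 2) (v' 1)
  score_3 : v' 3 = if x ∈ D then v 3 + 1 else max (v 3) (v' 2)

theorem chainStep_chainScore {α : Type*} [DecidableEq α] (A B C D : Finset α) (W : List α) (x : α) :
    ChainStep A B C D x (chainScore ![A, B, C, D] W) (chainScore ![A, B, C, D] (W ++ [x])) where
  score_0 := (chainScore_append_singleton_zero _ W x).trans (add_ite ..)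
  score_1 := chainScore_append_singleton_succ _ W x 0
  score_2 := chainScore_append_singleton_succ _ W x 1
  score_3 := chainScore_append_singleton_succ _ W x 2

/-- The expression of the scores `v` along the chain of singletons by the multiplicities `R₁` in the
first row of the insertion tableau. -/
structure SingletonScores (v R₁ : Fin 4 → ℕ) : Prop where
  score_0 : v 0 = R₁ 0
  score_1 : v 1 = R₁ 0 + R₁ 1
  score_2 : v 2 = R₁ 0 + R₁ 1 + R₁ 2
  score_3 : v 3 = R₁ 0 + R₁ 1 + R₁ 2 + R₁ 3

/-- The expression of the scores `p` along the poset of pairs by the multiplicities `R₁` and `R₂` in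
the first two rows of the insertion tableau. -/
structure PairScores (p : Fin 6 → ℕ) (R₁ R₂ : Fin 4 → ℕ) : Prop where
  score_01 : p 0 = R₁ 0 + R₁ 1 + R₂ 1
  score_02 : p 1 = R₁ 0 + R₂ 1 + R₁ 2 + max (R₂ 2) (R₁ 1)
  score_03 : p 2 = R₁ 0 + R₂ 1 + R₁ 3 + max (R₂ 2 + R₂ 3) (max (R₂ 2) (R₁ 1) + R₁ 2)
  score_12 : p 3 = R₁ 0 + R₁ 1 + R₂ 1 + R₁ 2 + R₂ 2
  score_13 : p 4 = R₁ 0 + R₁ 1 + R₂ 1 + R₂ 2 + R₁ 3 + max (R₂ 3) (R₁ 2)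
  score_23 : p 5 = R₁ 0 + R₁ 1 + R₁ 2 + R₁ 3 + R₂ 1 + R₂ 2 + R₂ 3

/-- The expression of the scores `v` along the chain of triples by the multiplicities `R₁`, `R₂` and
`R₃` in the first three rows of the insertion tableau. -/
structure TripleScores (v : Fin 4 → ℕ) (R₁ R₂ R₃ : Fin 4 → ℕ) : Prop where
  score_012 : v 0 = R₁ 0 + R₁ 1 + R₁ 2 + R₂ 1 + R₂ 2 + R₃ 2
  score_013 : v 1 =
    R₁ 0 + R₁ 1 + R₁ 3 + R₂ 1 + R₃ 2 + max (max (R₃ 3) (R₂ 2) + R₂ 3) (R₂ 2 + R₁ 2)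
  score_023 : v 2 =
    R₁ 0 + R₁ 2 + R₁ 3 + R₂ 1 + R₂ 3 + R₃ 2 + max (R₃ 3 + R₂ 2) (max (R₃ 3) (R₂ 2) + R₁ 1)
  score_123 : v 3 = R₁ 0 + R₁ 1 + R₁ 2 + R₁ 3 + R₂ 1 + R₂ 2 + R₂ 3 + R₃ 2 + R₃ 3

theorem SingletonScores.insert {v v' : Fin 4 → ℕ} {x : Fin 4} {y : Option (Fin 4)}
    {R₁ R₁' : Fin 4 → ℕ} (S : SingletonScores v R₁)
    (hv : ChainStep {0} {1} {2} {3} x v v') (I₁ : RowInsertion (some x) y R₁ R₁') :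
    SingletonScores v' R₁' := by
  obtain ⟨_, _, _, _⟩ := S
  obtain ⟨_, _, _, _⟩ := hv
  cases I₁.rowInsertionFour <;> simp only [Matrix.cons_val] at * <;> constructor <;>
    simp only [Matrix.cons_val] <;> grind

set_option maxHeartbeats 400000 in
-- every pair of row insertions is a case of its own
theorem PairScores.insert {p p' : Fin 6 → ℕ} {R₁ R₂ R₁' R₂' : Fin 4 → ℕ}
    {x : Fin 4} {y z : Option (Fin 4)} (S : PairScores p R₁ R₂) (hp : PairStep x p p')
    (I₁ : RowInsertion (some x) y R₁ R₁') (I₂ : RowInsertion y z R₂ R₂') :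
    PairScores p' R₁' R₂' := by
  obtain ⟨_, _, _, _, _, _⟩ := S
  obtain ⟨_, _, _, _, _, _⟩ := hp
  cases I₁.rowInsertionFour <;> cases I₂.rowInsertionFour <;>
    simp only [Matrix.cons_val] at * <;> constructor <;>
    simp only [Matrix.cons_val] <;> grind

set_option maxHeartbeats 1000000 in
-- every triple of row insertions is a case of its own
theorem TripleScores.insert {v v' : Fin 4 → ℕ} {x : Fin 4} {y z w : Option (Fin 4)}
    {R₁ R₁' R₂ R₂' R₃ R₃' : Fin 4 → ℕ} (S : TripleScores v R₁ R₂ R₃)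
    (hv : ChainStep {0, 1, 2} {0, 1, 3} {0, 2, 3} {1, 2, 3} x v v')
    (I₁ : RowInsertion (some x) y R₁ R₁') (I₂ : RowInsertion y z R₂ R₂')
    (I₃ : RowInsertion z w R₃ R₃') :
    TripleScores v' R₁' R₂' R₃' := by
  obtain ⟨_, _, _, _⟩ := S
  obtain ⟨_, _, _, _⟩ := hv
  cases I₁.rowInsertionFour <;> cases I₂.rowInsertionFour <;> cases I₃.rowInsertionFour <;>
    simp only [Matrix.cons_val] at * <;> constructor <;>
    simp only [Matrix.cons_val] <;> grind

/-- The scores and the vanishing entries that determine the row multiplicities of the insertion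
tableau of the word `W`. -/
structure TableauScores (W : List (Fin 4)) (R₁ R₂ R₃ R₄ : Fin 4 → ℕ) : Prop where
  singletons : SingletonScores (chainScore chain₁ W) R₁
  pairs : PairScores (pairScore W) R₁ R₂
  triples : TripleScores (chainScore chain₃ W) R₁ R₂ R₃
  length : chainScore chain₄ W 0 = ∑ r, (R₁ r + R₂ r + R₃ r + R₄ r)
  row₂_eq_zero : R₂ 0 = 0
  row₃_eq_zero : R₃ 0 = 0 ∧ R₃ 1 = 0
  row₄_eq_zero : R₄ 0 = 0 ∧ R₄ 1 = 0 ∧ R₄ 2 = 0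

theorem tableauScores_nil : TableauScores [] 0 0 0 0 := by
  constructor
  case singletons | pairs | triples => constructor <;> rfl
  all_goals simp [chainScore]

theorem TableauScores.insert {W : List (Fin 4)} {R₁ R₁' R₂ R₂' R₃ R₃' R₄ R₄' : Fin 4 → ℕ}
    {x : Fin 4} {y z w o : Option (Fin 4)} (S : TableauScores W R₁ R₂ R₃ R₄)
    (I₁ : RowInsertion (some x) y R₁ R₁') (I₂ : RowInsertion y z R₂ R₂')
    (I₃ : RowInsertion z w R₃ R₃') (I₄ : RowInsertion w o R₄ R₄') :
    TableauScores (W ++ [x]) R₁' R₂' R₃' R₄' := by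
  obtain ⟨singletons, pairs, triples, length, row₂, row₃, row₄⟩ := S
  have length_succ : chainScore chain₄ (W ++ [x]) 0 = chainScore chain₄ W 0 + 1 := by
    simp [chainScore_append_singleton_zero, weight, chain₄]
  refine ⟨singletons.insert (chainStep_chainScore _ _ _ _ W x) I₁,
    pairs.insert (pairStep_pairScore W x) I₁ I₂,
    triples.insert (chainStep_chainScore _ _ _ _ W x) I₁ I₂ I₃, ?_, ?_, ?_, ?_⟩
  all_goals
    simp only [Fin.sum_univ_four] at *
    clear singletons pairs triples
    cases I₁.rowInsertionFour <;> cases I₂.rowInsertionFour <;> cases I₃.rowInsertionFour <;>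
      cases I₄.rowInsertionFour <;> simp only [Matrix.cons_val] at * <;> omega

theorem TableauScores.ext {W W' : List (Fin 4)} {R₁ R₁' R₂ R₂' R₃ R₃' R₄ R₄' : Fin 4 → ℕ}
    (S : TableauScores W R₁ R₂ R₃ R₄) (S' : TableauScores W' R₁' R₂' R₃' R₄')
    (singletons : chainScore chain₁ W = chainScore chain₁ W')
    (pairs : pairScore W = pairScore W') (triples : chainScore chain₃ W = chainScore chain₃ W')
    (length : chainScore chain₄ W = chainScore chain₄ W') :
    R₁ = R₁' ∧ R₂ = R₂' ∧ R₃ = R₃' ∧ R₄ = R₄' := by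
  obtain ⟨⟨_, _, _, _⟩, ⟨_, -, -, _, -, _⟩, ⟨_, -, -, _⟩, h, _, _, _⟩ := S
  obtain ⟨⟨_, _, _, _⟩, ⟨_, -, -, _, -, _⟩, ⟨_, -, -, _⟩, h', _, _, _⟩ := S'
  simp only [Fin.sum_univ_four, singletons, pairs, triples, length] at *
  have ext_iff (f g : Fin 4 → ℕ) : f = g ↔ f 0 = g 0 ∧ f 1 = g 1 ∧ f 2 = g 2 ∧ f 3 = g 3 := by
    simp [funext_iff, Fin.forall_fin_succ]
  simp only [ext_iff]
  omega

theorem RowInsertion.eq_none {R₁ R₁' R₂ R₂' R₃ R₃' R₄ R₄' : Fin 4 → ℕ} {x : Fin 4}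
    {y z w o : Option (Fin 4)} (I₁ : RowInsertion (some x) y R₁ R₁')
    (I₂ : RowInsertion y z R₂ R₂') (I₃ : RowInsertion z w R₃ R₃') (I₄ : RowInsertion w o R₄ R₄') :
    o = none := by
  cases I₁.rowInsertionFour <;> cases I₂.rowInsertionFour <;> cases I₃.rowInsertionFour <;>
    cases I₄.rowInsertionFour <;> rfl

theorem IsPlactic.exists_tableauScores {M : Type*} [Monoid M] {s : Fin 4 → M} (hs : IsPlactic s)
    (W : List (Fin 4)) : ∃ R₁ R₂ R₃ R₄ : Multiset (Fin 4),
      TableauScores W (R₁.count ·) (R₂.count ·) (R₃.count ·) (R₄.count ·) ∧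
        tableauProd s [R₁, R₂, R₃, R₄] = (W.map s).prod := by
  induction W using List.reverseRecOn with
  | nil => exact ⟨0, 0, 0, 0, tableauScores_nil, by simp [tableauProd, rowProd]⟩
  | append_singleton W x ih =>
    obtain ⟨R₁, R₂, R₃, R₄, S, hW⟩ := ih
    obtain ⟨y, R₁', e₁, I₁⟩ := exists_rowInsertion (some x) R₁ [R₂, R₃, R₄]
    obtain ⟨z, R₂', e₂, I₂⟩ := exists_rowInsertion y R₂ [R₃, R₄]
    obtain ⟨w, R₃', e₃, I₃⟩ := exists_rowInsertion z R₃ [R₄]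
    obtain ⟨o, R₄', e₄, I₄⟩ := exists_rowInsertion w R₄ []
    obtain rfl := I₁.eq_none I₂ I₃ I₄
    have insert_eq : schenstedInsert (some x) [R₁, R₂, R₃, R₄] = [R₁', R₂', R₃', R₄'] := by
      rw [e₁, e₂, e₃, e₄, schenstedInsert]
    refine ⟨R₁', R₂', R₃', R₄', S.insert I₁ I₂ I₃ I₄, ?_⟩
    rw [← insert_eq, hs.tableauProd_schenstedInsert, hW]
    simp

theorem IsPlactic.prod_map_eq_of_chainScore_eq {M : Type*} [Monoid M] {s : Fin 4 → M}
    (hs : IsPlactic s) {W W' : List (Fin 4)} (h₁ : chainScore chain₁ W = chainScore chain₁ W')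
    (h₂ : chainScore chain₂ W = chainScore chain₂ W')
    (h₂' : chainScore chain₂' W = chainScore chain₂' W')
    (h₃ : chainScore chain₃ W = chainScore chain₃ W')
    (h₄ : chainScore chain₄ W = chainScore chain₄ W') :
    (W.map s).prod = (W'.map s).prod := by
  obtain ⟨R₁, R₂, R₃, R₄, S, hW⟩ := hs.exists_tableauScores W
  obtain ⟨R₁', R₂', R₃', R₄', S', hW'⟩ := hs.exists_tableauScores W'
  have count_inj {R R' : Multiset (Fin 4)} (h : (R.count ·) = (R'.count ·)) : R = R' :=
    Multiset.ext.2 (congr_fun h)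
  obtain ⟨e₁, e₂, e₃, e₄⟩ := S.ext S' h₁ (by simp only [pairScore, h₂, h₂']) h₃ h₄
  rw [← hW, ← hW', count_inj e₁, count_inj e₂, count_inj e₃, count_inj e₄]

theorem isPlactic_of : IsPlactic fun a : Fin 4 => (FreeMonoid.of a : P4) where
  knuth₁ hab hbc := (Con.eq _).2 (.of _ _ (.inl ⟨_, _, _, hab, hbc, rfl, rfl⟩))
  knuth₂ hab hbc := (Con.eq _).2 (.of _ _ (.inr ⟨_, _, _, hab, hbc, rfl, rfl⟩))

theorem P4.coe_eq_coe_of_chainScore_eq {W W' : FreeMonoid (Fin 4)}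
    (h₁ : chainScore chain₁ W.toList = chainScore chain₁ W'.toList)
    (h₂ : chainScore chain₂ W.toList = chainScore chain₂ W'.toList)
    (h₂' : chainScore chain₂' W.toList = chainScore chain₂' W'.toList)
    (h₃ : chainScore chain₃ W.toList = chainScore chain₃ W'.toList)
    (h₄ : chainScore chain₄ W.toList = chainScore chain₄ W'.toList) : (W : P4) = W' := by
  have coe_eq (V : FreeMonoid (Fin 4)) :
      (V : P4) = (V.toList.map fun a => (FreeMonoid.of a : P4)).prod := by
    rw [← FreeMonoid.lift_apply]
    exact DFunLike.congr_fun (FreeMonoid.lift_restrict (conGen KnuthRel).mk').symm V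
  rw [coe_eq, coe_eq, isPlactic_of.prod_map_eq_of_chainScore_eq h₁ h₂ h₂' h₃ h₄]

end RankFour

/-- If `u[ab,ba] = v[ab,ba]` is a semigroup identity satisfied by `UT₄(𝕋)`, then
the identity `abuab[ab,ba] = abvab[ab,ba]` is satisfied by the plactic monoid
`P₄`. -/
theorem stmt19 (u v : List Bool)
    (hne : subst u [true, false] [false, true] ≠ subst v [true, false] [false, true])
    (hUT4 : ∀ X Y : Matrix (Fin 4) (Fin 4) Trop, IsUT X → IsUT Y →
      evalWord (subst u [true, false] [false, true]) X Y =
        evalWord (subst v [true, false] [false, true]) X Y) :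
    ∀ x y : P4,
      evalM (subst ([true, false] ++ u ++ [true, false]) [true, false] [false, true]) x y =
      evalM (subst ([true, false] ++ v ++ [true, false]) [true, false] [false, true]) x y := by
  intro x y
  obtain ⟨X, rfl⟩ := Con.mk'_surjective x
  obtain ⟨Y, rfl⟩ := Con.mk'_surjective y
  have ut : TropMatrix.UTSatisfies 4 (substAbBa u) (substAbBa v) := fun A B hA hB => by
    rw [← TropMatrix.evalWord_eq_evalM, ← TropMatrix.evalWord_eq_evalM]
    exact hUT4 A B hA hB
  have score (C : Fin 4 → Finset (Fin 4)) :=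
    TropMatrix.chainScore_eq_of_chainRep_eq (TropMatrix.chainRep_evalM_eq_of_utSatisfies ut C X Y)
  have balanced {C : Fin 5 → Finset (Fin 4)} hC :=
    TropMatrix.chainScore_eq_of_chainRep_eq
      (TropMatrix.chainRep_evalM_eq_of_balanced ut (C := C) hC X Y)
  rw [← map_evalM, ← map_evalM]
  exact P4.coe_eq_coe_of_chainScore_eq (score chain₁) (balanced (by decide)) (balanced (by decide))
    (score chain₃) (score chain₄)
end
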